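/- Almost all cographs have a cospectral mate. Precisely, letting c(n) denote the number of isomorphism classes of cographs on n vertices and c*(n) denote the number of isomorphism classes of cographs on n vertices G for which there exists a graph H on n vertices that is cospectral with G but not isomorphic to G, one has lim_{n→∞} c*(n)/c(n) = 1. -/

import Mathlib

open SimpleGraph

/-- The characteristic polynomial (over `ℝ`) of the adjacency matrix of a finite graph. -/
noncomputable def adjCharPoly {V : Type} [Fintype V] [DecidableEq V] (G : SimpleGraph V) :
    Polynomial ℝ :=
  letI := Classical.decRel G.Adj
  Matrix.charpoly (G.adjMatrix ℝ)

/-- Two finite graphs are cospectral if their adjacency matrices have the same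
characteristic polynomial. -/
def Cospectral {V W : Type} [Fintype V] [DecidableEq V] [Fintype W] [DecidableEq W]
    (G : SimpleGraph V) (H : SimpleGraph W) : Prop :=
  adjCharPoly G = adjCharPoly H

/-- Generalized cospectrality: the graphs are cospectral and so are their complements. -/
def GenCospectral {V W : Type} [Fintype V] [DecidableEq V] [Fintype W] [DecidableEq W]
    (G : SimpleGraph V) (H : SimpleGraph W) : Prop :=
  Cospectral G H ∧ Cospectral Gᶜ Hᶜ

/-- A cograph is a graph with no induced path `P₄` (on 4 vertices). -/
def IsCograph {V : Type} (G : SimpleGraph V) : Prop :=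
  ¬ ∃ f : Fin 4 ↪ V, ∀ i j, G.Adj (f i) (f j) ↔ (SimpleGraph.pathGraph 4).Adj i j

/-- The number of isomorphism classes of graphs on `n` vertices satisfying an
isomorphism-invariant property `P`. -/
noncomputable def classCount (n : ℕ) (P : SimpleGraph (Fin n) → Prop) : ℕ :=
  Nat.card (Quot fun G H : {G : SimpleGraph (Fin n) // P G} => Nonempty (G.1 ≃g H.1))

section AnalyticPart

open Finset

/-- Truncated Euler product. -/
noncomputable def EN (s : ℕ → ℕ) (N : ℕ) (x : ℝ) : ℝ :=
  ∏ i ∈ Finset.Icc 1 N, ((1 - x ^ i)⁻¹) ^ (s i)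

lemma EN_factor {x : ℝ} (h0 : 0 ≤ x) (h1 : x < 1) {i : ℕ} (hi : 1 ≤ i) : 0 < 1 - x ^ i := by
  have : x ^ i < 1 := pow_lt_one₀ h0 h1 (by omega)
  linarith

lemma EN_pos (s : ℕ → ℕ) (N : ℕ) {x : ℝ} (h0 : 0 ≤ x) (h1 : x < 1) : 0 < EN s N x := by
  apply Finset.prod_pos
  intro i hi
  have := EN_factor h0 h1 (Finset.mem_Icc.1 hi).1
  positivity

lemma EN_step_up (s : ℕ → ℕ) (N : ℕ) {r x : ℝ} (h0 : 0 ≤ r) (hr : r ≤ x) (h1 : x < 1) :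
    EN s N x ≤ EN s N r *
      Real.exp (∑ i ∈ Finset.Icc 1 N, (s i : ℝ) * ((x ^ i - r ^ i) / (1 - x ^ i))) := by
  unfold EN
  rw [Real.exp_sum, ← Finset.prod_mul_distrib]
  apply Finset.prod_le_prod
  · intro i hi
    have := EN_factor (h0.trans hr) h1 (Finset.mem_Icc.1 hi).1
    positivity
  · intro i hi
    have hx := EN_factor (h0.trans hr) h1 (Finset.mem_Icc.1 hi).1
    have hrr := EN_factor h0 (hr.trans_lt h1) (Finset.mem_Icc.1 hi).1
    rw [Real.exp_nat_mul, ← mul_pow]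
    apply pow_le_pow_left₀ (by positivity)
    have h2 := Real.add_one_le_exp ((x ^ i - r ^ i) / (1 - x ^ i))
    have h3 : (x ^ i - r ^ i) / (1 - x ^ i) + 1 = (1 - r ^ i) * (1 - x ^ i)⁻¹ := by
      field_simp; ring
    rw [h3] at h2
    calc (1 - x ^ i)⁻¹ = (1 - r ^ i)⁻¹ * ((1 - r ^ i) * (1 - x ^ i)⁻¹) := by field_simp
      _ ≤ _ := by gcongr

lemma EN_step_down (s : ℕ → ℕ) (N : ℕ) {r x : ℝ} (h0 : 0 ≤ r) (hr : r ≤ x) (h1 : x < 1) :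
    EN s N r * (1 + ∑ i ∈ Finset.Icc 1 N, (s i : ℝ) * (x ^ i - r ^ i)) ≤ EN s N x := by
  have key : 1 + ∑ i ∈ Finset.Icc 1 N, (s i : ℝ) * (x ^ i - r ^ i) ≤
      ∏ i ∈ Finset.Icc 1 N, (1 + (s i : ℝ) * (x ^ i - r ^ i)) := by
    induction N with
    | zero => simp
    | succ n ih =>
      rw [Finset.sum_Icc_succ_top (by omega), Finset.prod_Icc_succ_top (by omega)]
      have h2 : ∀ i, 0 ≤ (s i : ℝ) * (x ^ i - r ^ i) := fun i =>
        mul_nonneg (by positivity) (sub_nonneg.2 (pow_le_pow_left₀ h0 hr i))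
      have h3 := Finset.sum_nonneg (fun i (_ : i ∈ Finset.Icc 1 n) => h2 i)
      nlinarith [h2 (n+1), mul_nonneg h3 (h2 (n+1)), mul_le_mul_of_nonneg_right ih (h2 (n+1))]
  refine (mul_le_mul_of_nonneg_left key (EN_pos s N h0 (hr.trans_lt h1)).le).trans ?_
  unfold EN
  rw [← Finset.prod_mul_distrib]
  apply Finset.prod_le_prod
  · intro i hi
    have hrr := EN_factor h0 (hr.trans_lt h1) (Finset.mem_Icc.1 hi).1
    have : 0 ≤ (s i : ℝ) * (x ^ i - r ^ i) :=
        mul_nonneg (by positivity) (sub_nonneg.2 (pow_le_pow_left₀ h0 hr i))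
    positivity
  · intro i hi
    have hx := EN_factor (h0.trans hr) h1 (Finset.mem_Icc.1 hi).1
    have hrr := EN_factor h0 (hr.trans_lt h1) (Finset.mem_Icc.1 hi).1
    have hd : 0 ≤ (x ^ i - r ^ i) := (sub_nonneg.2 (pow_le_pow_left₀ h0 hr i))
    have hb : 1 + (s i : ℝ) * (x ^ i - r ^ i) ≤ (1 + (x ^ i - r ^ i)) ^ (s i) :=
      one_add_mul_le_pow (by linarith) _
    calc _ ≤ (1 - r ^ i)⁻¹ ^ s i * (1 + (x ^ i - r ^ i)) ^ (s i) := by gcongr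
      _ = ((1 - r ^ i)⁻¹ * (1 + (x ^ i - r ^ i))) ^ s i := by rw [mul_pow]
      _ ≤ _ := by
        apply pow_le_pow_left₀ (by positivity)
        rw [inv_mul_le_iff₀ hrr, ← div_eq_mul_inv, le_div_iff₀ hx]
        have : 0 ≤ x ^ i := by have := h0.trans hr; positivity
        nlinarith [mul_nonneg hd this]

lemma EN_zero (s : ℕ → ℕ) (N : ℕ) : EN s N 0 = 1 := by
  unfold EN
  apply Finset.prod_eq_one
  intro i hi
  have := (Finset.mem_Icc.1 hi).1
  simp [zero_pow (show i ≠ 0 by omega)]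

lemma EN_ge_sum (s : ℕ → ℕ) (N : ℕ) {x : ℝ} (h0 : 0 ≤ x) (h1 : x < 1) :
    1 + ∑ i ∈ Finset.Icc 1 N, (s i : ℝ) * x ^ i ≤ EN s N x := by
  have := EN_step_down s N le_rfl h0 h1
  rw [EN_zero, one_mul] at this
  convert this using 3 with i hi
  have := (Finset.mem_Icc.1 hi).1
  simp [zero_pow (show i ≠ 0 by omega)]

lemma EN_mono (s t : ℕ → ℕ) (hst : ∀ i, s i ≤ t i) (N : ℕ) {x : ℝ} (h0 : 0 ≤ x) (h1 : x < 1) :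
    EN s N x ≤ EN t N x := by
  apply Finset.prod_le_prod
  · intro i hi
    have := EN_factor h0 h1 (Finset.mem_Icc.1 hi).1
    positivity
  · intro i hi
    have := EN_factor h0 h1 (Finset.mem_Icc.1 hi).1
    apply pow_le_pow_right₀ _ (hst i)
    rw [one_le_inv₀ this]
    have : 0 ≤ x ^ i := by positivity
    linarith

lemma EN_mono_N (s : ℕ → ℕ) {N M : ℕ} (hNM : N ≤ M) {x : ℝ} (h0 : 0 ≤ x) (h1 : x < 1) :
    EN s N x ≤ EN s M x := by
  apply Finset.prod_le_prod_of_subset_of_one_le (Finset.Icc_subset_Icc le_rfl hNM)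
  · intro i hi
    have := EN_factor h0 h1 (Finset.mem_Icc.1 hi).1
    positivity
  · intro i hi _
    have := EN_factor h0 h1 (Finset.mem_Icc.1 hi).1
    apply one_le_pow₀
    rw [one_le_inv₀ this]
    have : 0 ≤ x ^ i := by positivity
    linarith

lemma EN_strict (s t : ℕ → ℕ) (hst : ∀ i, s i ≤ t i) {k : ℕ} (hk : 1 ≤ k) (hsk : s k < t k)
    {N : ℕ} (hN : k ≤ N) {x : ℝ} (h0 : 0 ≤ x) (h1 : x < 1) :
    EN s N x ≤ (1 - x ^ k) * EN t N x := by
  have hmem : k ∈ Finset.Icc 1 N := Finset.mem_Icc.2 ⟨hk, hN⟩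
  have hkp := EN_factor h0 h1 hk
  have h2 : EN (fun i => if i = k then s i + 1 else s i) N x ≤ EN t N x := by
    apply EN_mono _ _ _ _ h0 h1
    intro i; split_ifs with h
    · subst h; omega
    · exact hst i
  have h3 : EN s N x = (1 - x ^ k) * EN (fun i => if i = k then s i + 1 else s i) N x := by
    unfold EN
    rw [← Finset.mul_prod_erase _ _ hmem, ← Finset.mul_prod_erase (a := k) _ _ hmem, ← mul_assoc]
    congr 1
    · simp only [if_true, pow_succ]
      field_simp
    · apply Finset.prod_congr rfl
      intro i hi
      simp [Finset.ne_of_mem_erase hi]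
  rw [h3]
  exact mul_le_mul_of_nonneg_left h2 hkp.le

lemma EN_continuousAt (s : ℕ → ℕ) (N : ℕ) {x : ℝ} (h0 : 0 ≤ x) (h1 : x < 1) :
    ContinuousAt (EN s N) x := by
  unfold EN
  apply tendsto_finsetProd
  intro i hi
  have := EN_factor h0 h1 (Finset.mem_Icc.1 hi).1
  exact ((continuousAt_const.sub (continuousAt_id.pow i)).inv₀ this.ne').pow _

/-- One step of the bootstrap. -/
lemma boot_step (s : ℕ → ℕ) (ms : ℕ → ℕ → ℕ)
    (Hs : ∀ N x, 0 ≤ x → x < 1 → HasSum (fun n => (ms N n : ℝ) * x ^ n) (EN s N x))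
    (h1 : s 1 ≤ 1) (h1' : ∀ N, 1 ≤ N → s 1 ≤ ms N 1)
    (h2 : ∀ N n, 2 ≤ n → n ≤ N → 2 * s n ≤ ms N n)
    (h3 : ∀ N, 1 ≤ N → s (N + 1) ≤ ms N (N + 1))
    {r x : ℝ} (h0 : 0 ≤ r) (hr : r ≤ x) (hx : x < 1) (N : ℕ) :
    ∑ i ∈ Finset.Icc 1 (N + 1), (s i : ℝ) * (x ^ i - r ^ i) ≤
      (EN s N x - EN s N r) + (x - r) - ∑ i ∈ Finset.Icc 1 N, (s i : ℝ) * (x ^ i - r ^ i) := by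
  have hd : ∀ i, 0 ≤ (x ^ i - r ^ i) := fun i => (sub_nonneg.2 (pow_le_pow_left₀ h0 hr i))
  have hE := (Hs N x (h0.trans hr) hx).sub (Hs N r h0 (hr.trans_lt hx))
  have hE' : HasSum (fun n => (ms N n : ℝ) * (x ^ n - r ^ n)) (EN s N x - EN s N r) := by
    simpa only [mul_sub] using hE
  have hle := sum_le_hasSum (Finset.Icc 1 (N+1))
    (fun n _ => mul_nonneg (Nat.cast_nonneg (ms N n)) (hd n)) hE'
  have s1 : (s 1 : ℝ) ≤ 1 := by exact_mod_cast h1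
  rcases Nat.eq_zero_or_pos N with rfl | hN
  · simp at hle ⊢
    simp only [EN] at hle ⊢
    simp at hle ⊢
    nlinarith
  · rw [Finset.sum_Icc_succ_top (by omega)] at hle ⊢
    have h3' : (s (N+1) : ℝ) ≤ ms N (N+1) := by exact_mod_cast h3 N hN
    have hN3 := mul_le_mul_of_nonneg_right h3' (hd (N+1))
    have hmain : 2 * ∑ i ∈ Finset.Icc 1 N, (s i : ℝ) * (x ^ i - r ^ i) ≤
        ∑ i ∈ Finset.Icc 1 N, (ms N i : ℝ) * (x ^ i - r ^ i) + (x - r) := by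
      rw [← Finset.add_sum_Ioc_eq_sum_Icc hN, ← Finset.add_sum_Ioc_eq_sum_Icc hN, mul_add,
        Finset.mul_sum]
      have e1 : ∑ i ∈ Finset.Ioc 1 N, 2 * ((s i : ℝ) * (x ^ i - r ^ i)) ≤
          ∑ i ∈ Finset.Ioc 1 N, (ms N i : ℝ) * (x ^ i - r ^ i) := by
        apply Finset.sum_le_sum
        intro i hi
        have := Finset.mem_Ioc.1 hi
        have h4 : (2 * s i : ℝ) ≤ ms N i := by exact_mod_cast h2 N i (by omega) this.2
        nlinarith [mul_le_mul_of_nonneg_right h4 (hd i)]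
      have h5 : (s 1 : ℝ) ≤ ms N 1 := by exact_mod_cast h1' N hN
      have := hd 1
      simp only [pow_one] at *
      nlinarith
    linarith

/-- If the truncated Euler products stay below `2 - κ` at `r`, the series converges beyond `r`. -/
lemma extend_summable (s : ℕ → ℕ) (ms : ℕ → ℕ → ℕ)
    (Hs : ∀ N x, 0 ≤ x → x < 1 → HasSum (fun n => (ms N n : ℝ) * x ^ n) (EN s N x))
    (h1 : s 1 ≤ 1) (h1' : ∀ N, 1 ≤ N → s 1 ≤ ms N 1)
    (h2 : ∀ N n, 2 ≤ n → n ≤ N → 2 * s n ≤ ms N n)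
    (h3 : ∀ N, 1 ≤ N → s (N + 1) ≤ ms N (N + 1))
    {r κ : ℝ} (h0 : 0 ≤ r) (hr : r < 1) (hκ : 0 < κ) (hE : ∀ N, EN s N r ≤ 2 - κ) :
    ∃ x, r < x ∧ x < 1 ∧ Summable (fun n => (s n : ℝ) * x ^ n) := by
  have hκ1 : κ ≤ 1 := by
    have := hE 0
    simp [EN] at this
    linarith
  set xb := (1 + r) / 2 with hxb
  have hxb1 : xb < 1 := by rw [hxb]; linarith
  have hxbr : r < xb := by rw [hxb]; linarith
  have hxb0 : 0 ≤ xb := by linarith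
  obtain ⟨I, hI⟩ := exists_pow_lt_of_lt_one (show 0 < κ / 20 by positivity) hxb1
  set dl : ℝ → ℝ := fun x => ∑ i ∈ Finset.Icc 1 I, (s i : ℝ) * ((x ^ i - r ^ i) / (1 - x ^ i))
    with hdl
  have hcont : Filter.Tendsto dl (nhds r) (nhds 0) := by
    have : Filter.Tendsto dl (nhds r)
        (nhds (∑ i ∈ Finset.Icc 1 I, (s i : ℝ) * ((r ^ i - r ^ i) / (1 - r ^ i)))) := by
      apply tendsto_finsetSum
      intro i hi
      have := EN_factor h0 hr (Finset.mem_Icc.1 hi).1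
      apply Filter.Tendsto.const_mul
      apply Filter.Tendsto.div
      · exact ((continuous_pow i).tendsto r).sub_const _
      · exact ((continuous_pow i).tendsto r).const_sub _
      · exact this.ne'
    simpa using this
  have ev1 : ∀ᶠ x in nhdsWithin r (Set.Ioi r), dl x < κ ^ 2 / 400 :=
    (hcont.mono_left nhdsWithin_le_nhds).eventually_lt_const (by positivity)
  have ev2 : ∀ᶠ x in nhdsWithin r (Set.Ioi r), x ∈ Set.Ioo r (min xb (r + κ ^ 2 / 400)) :=
    Ioo_mem_nhdsGT (lt_min hxbr (by nlinarith [pow_pos hκ 2]))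
  obtain ⟨x, hx1, hx2⟩ := (ev1.and ev2).exists
  have hrx : r < x := hx2.1
  have hxx : x < xb := hx2.2.trans_le (min_le_left _ _)
  have hxe : x < r + κ ^ 2 / 400 := hx2.2.trans_le (min_le_right _ _)
  have hxlt1 : x < 1 := hxx.trans hxb1
  have hx0 : 0 ≤ x := by linarith
  refine ⟨x, hrx, hxlt1, ?_⟩
  have hd : ∀ i, 0 ≤ (x ^ i - r ^ i) := fun i => (sub_nonneg.2 (pow_le_pow_left₀ h0 hrx.le i))
  set D : ℕ → ℝ := fun N => ∑ i ∈ Finset.Icc 1 N, (s i : ℝ) * (x ^ i - r ^ i) with hD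
  have hD0 : ∀ N, 0 ≤ D N := fun N => Finset.sum_nonneg fun i _ =>
    mul_nonneg (Nat.cast_nonneg _) (hd i)
  have hdl0 : 0 ≤ dl x := Finset.sum_nonneg fun i hi => by
    have := EN_factor hx0 hxlt1 (Finset.mem_Icc.1 hi).1
    exact mul_nonneg (Nat.cast_nonneg _) (div_nonneg (hd i) this.le)
  have hexpo : ∀ N, ∑ i ∈ Finset.Icc 1 N, (s i : ℝ) * ((x ^ i - r ^ i) / (1 - x ^ i)) ≤
      dl x + (1 + κ / 10) * D N := by
    intro N
    rw [hD, hdl]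
    simp only
    rw [Finset.mul_sum]
    have hsplit : ∀ i ∈ Finset.Icc 1 N, (s i : ℝ) * ((x ^ i - r ^ i) / (1 - x ^ i)) ≤
        (if i ≤ I then (s i : ℝ) * ((x ^ i - r ^ i) / (1 - x ^ i)) else 0) +
        (1 + κ / 10) * ((s i : ℝ) * (x ^ i - r ^ i)) := by
      intro i hi
      have hp := EN_factor hx0 hxlt1 (Finset.mem_Icc.1 hi).1
      have hsd : 0 ≤ (s i : ℝ) * (x ^ i - r ^ i) := mul_nonneg (Nat.cast_nonneg _) (hd i)
      split_ifs with h
      · have : 0 ≤ (1 + κ / 10) * ((s i : ℝ) * (x ^ i - r ^ i)) := by positivity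
        linarith
      · have hxi : x ^ i ≤ κ / 20 := by
          calc x ^ i ≤ x ^ I := pow_le_pow_of_le_one hx0 hxlt1.le (by omega)
            _ ≤ xb ^ I := pow_le_pow_left₀ hx0 hxx.le _
            _ ≤ _ := hI.le
        rw [zero_add, mul_div_assoc', div_le_iff₀ hp]
        have : 1 ≤ (1 + κ / 10) * (1 - x ^ i) := by nlinarith
        nlinarith [mul_le_mul_of_nonneg_right this hsd]
    refine (Finset.sum_le_sum hsplit).trans ?_
    rw [Finset.sum_add_distrib, ← Finset.sum_filter]
    refine add_le_add ?_ le_rfl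
    apply Finset.sum_le_sum_of_subset_of_nonneg
    · intro i hi
      simp only [Finset.mem_filter, Finset.mem_Icc] at hi ⊢
      omega
    · intro i hi _
      have := EN_factor hx0 hxlt1 (Finset.mem_Icc.1 hi).1
      exact mul_nonneg (Nat.cast_nonneg _) (div_nonneg (hd i) this.le)
  have hbound : ∀ N, D N ≤ κ / 40 := by
    intro N
    induction N with
    | zero => simp [hD]; positivity
    | succ N ih =>
      have hb := boot_step s ms Hs h1 h1' h2 h3 h0 hrx.le hxlt1 N
      change D (N+1) ≤ _ - D N at hb
      have hup := EN_step_up s N h0 hrx.le hxlt1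
      set u := dl x + (1 + κ / 10) * D N with hu
      have hN0 := hD0 N
      have hu0 : 0 ≤ u := by positivity
      have hu1 : u ≤ κ / 10 := by nlinarith
      have hexp : Real.exp u - 1 ≤ u + u ^ 2 := by
        have := Real.abs_exp_sub_one_sub_id_le (x := u) (by rw [abs_of_nonneg hu0]; linarith)
        have := (abs_le.1 this).2
        linarith
      have hup2 : EN s N x ≤ EN s N r * Real.exp u :=
        hup.trans (mul_le_mul_of_nonneg_left (Real.exp_le_exp.2 (hexpo N))
          (EN_pos s N h0 hr).le)
      have hdiff : EN s N x - EN s N r ≤ (2 - κ) * (u + u ^ 2) := by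
        calc EN s N x - EN s N r ≤ EN s N r * (Real.exp u - 1) := by linarith
          _ ≤ (2 - κ) * (u + u ^ 2) := by
            apply mul_le_mul (hE N) hexp _ (by linarith)
            linarith [Real.add_one_le_exp u]
      have hq : (2 - κ) * (1 + u) * (1 + κ / 10) ≤ 2 - κ / 2 := by
        have a1 : (2 - κ) * (1 + u) ≤ (2 - κ) * (1 + κ / 10) := by
          apply mul_le_mul_of_nonneg_left _ (by linarith); linarith
        have a2 : (2 - κ) * (1 + u) * (1 + κ / 10) ≤ (2 - κ) * (1 + κ / 10) * (1 + κ / 10) :=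
          mul_le_mul_of_nonneg_right a1 (by positivity)
        nlinarith [pow_pos hκ 2, pow_pos hκ 3]
      have hq2 : (2 - κ) * (1 + u) ≤ 3 := by nlinarith
      have e1 : (2 - κ) * (u + u ^ 2) = (2 - κ) * (1 + u) * dl x +
          (2 - κ) * (1 + u) * (1 + κ / 10) * D N := by
        rw [hu]; ring
      have e2 := mul_le_mul_of_nonneg_right hq hN0
      have e3 := mul_le_mul_of_nonneg_right hq2 hdl0
      nlinarith
  apply summable_of_sum_range_le (c := s 0 + (2 + κ / 40))
  · intro n; positivity
  · intro n
    have hsub : ∑ i ∈ Finset.range n, (s i : ℝ) * x ^ i ≤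
        ∑ i ∈ insert 0 (Finset.Icc 1 n), (s i : ℝ) * x ^ i := by
      apply Finset.sum_le_sum_of_subset_of_nonneg
      · intro i hi
        simp only [Finset.mem_range, Finset.mem_insert, Finset.mem_Icc] at hi ⊢
        omega
      · intros; positivity
    rw [Finset.sum_insert (by simp)] at hsub
    have hS := EN_ge_sum s n h0 hr
    have hDn := hbound n
    have : D n = ∑ i ∈ Finset.Icc 1 n, (s i : ℝ) * x ^ i - ∑ i ∈ Finset.Icc 1 n, (s i : ℝ) * r ^ i := by
      rw [hD]; simp only [mul_sub, Finset.sum_sub_distrib]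
    have := hE n
    simp only [pow_zero, mul_one] at hsub
    linarith

theorem analytic_main (t s C : ℕ → ℕ) (mt ms : ℕ → ℕ → ℕ)
    (Ht : ∀ N x, 0 ≤ x → x < 1 → HasSum (fun n => (mt N n : ℝ) * x ^ n) (EN t N x))
    (Hs : ∀ N x, 0 ≤ x → x < 1 → HasSum (fun n => (ms N n : ℝ) * x ^ n) (EN s N x))
    (mtle : ∀ N n, mt N n ≤ C n) (mteq : ∀ N n, n ≤ N → mt N n = C n)
    (C0 : C 0 = 1) (C1 : C 1 = 1) (C2 : ∀ n, 2 ≤ n → C n = 2 * t n) (t0 : t 0 = 0) (t1 : t 1 = 1)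
    (ht3 : ∀ N, 1 ≤ N → t (N + 1) ≤ mt N (N + 1))
    (hs1 : ∀ N, 1 ≤ N → s 1 ≤ ms N 1)
    (hs2 : ∀ N n, 2 ≤ n → n ≤ N → 2 * s n ≤ ms N n)
    (hs3 : ∀ N, 1 ≤ N → s (N + 1) ≤ ms N (N + 1))
    (hst : ∀ n, s n ≤ t n) {k : ℕ} (hk : 1 ≤ k) (hsk : s k < t k)
    (hsup : ∀ n m, 1 ≤ n → 1 ≤ m → t n * t m ≤ 2 * t (n + m)) :
    Filter.Tendsto (fun n => (s n : ℝ) / t n) Filter.atTop (nhds 0) := by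
  have tpos : ∀ n, 1 ≤ n → 1 ≤ t n := by
    intro n hn
    induction n, hn using Nat.le_induction with
    | base => omega
    | succ n hn ih =>
      have := hsup n 1 hn le_rfl
      rw [t1] at this
      omega
  have hC : ∀ x : ℝ, 0 ≤ x → Summable (fun n => (t n : ℝ) * x ^ n) →
      HasSum (fun n => (C n : ℝ) * x ^ n) (1 + 2 * ∑' n, (t n : ℝ) * x ^ n - x) := by
    intro x hx hsum
    have a1 := (hsum.hasSum.mul_left 2)
    have a2 : HasSum (fun n : ℕ => if n = 0 then (1 : ℝ) else 0) 1 := hasSum_ite_eq 0 1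
    have a3 : HasSum (fun n : ℕ => if n = 1 then x else 0) x := hasSum_ite_eq 1 x
    have a4 := (a2.add a1).sub a3
    suffices e : (fun n => (C n : ℝ) * x ^ n) = fun n : ℕ => (if n = 0 then (1 : ℝ) else 0) +
        2 * ((t n : ℝ) * x ^ n) - (if n = 1 then x else 0) by
      rw [e]; exact a4
    funext n
    rcases n with _ | _ | n
    · simp [C0, t0]
    · simp [C1, t1]; ring
    · rw [C2 _ (by omega)]; push_cast; simp; ring
  have hEC : ∀ N (x : ℝ), 0 ≤ x → x < 1 → Summable (fun n => (t n : ℝ) * x ^ n) →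
      EN t N x ≤ 1 + 2 * ∑' n, (t n : ℝ) * x ^ n - x := by
    intro N x h0 h1 hsum
    refine hasSum_le (fun n => ?_) (Ht N x h0 h1) (hC x h0 hsum)
    have : (mt N n : ℝ) ≤ C n := by exact_mod_cast mtle N n
    gcongr
  have hElim : ∀ (x : ℝ), 0 ≤ x → x < 1 → Summable (fun n => (t n : ℝ) * x ^ n) →
      Filter.Tendsto (fun N => EN t N x) Filter.atTop
        (nhds (1 + 2 * ∑' n, (t n : ℝ) * x ^ n - x)) := by
    intro x h0 h1 hsum
    have hl := (hC x h0 hsum).tendsto_sum_nat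
    refine tendsto_of_tendsto_of_tendsto_of_le_of_le hl tendsto_const_nhds (fun N => ?_)
      (fun N => hEC N x h0 h1 hsum)
    calc ∑ i ∈ Finset.range N, (C i : ℝ) * x ^ i = ∑ i ∈ Finset.range N, (mt N i : ℝ) * x ^ i := by
          apply Finset.sum_congr rfl
          intro i hi
          rw [mteq N i (Finset.mem_range.1 hi).le]
      _ ≤ _ := sum_le_hasSum _ (fun n _ => by positivity) (Ht N x h0 h1)
  have hTlim : ∀ (x : ℝ), Summable (fun n => (t n : ℝ) * x ^ n) →
      Filter.Tendsto (fun N => ∑ i ∈ Finset.Icc 1 N, (t i : ℝ) * x ^ i) Filter.atTop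
        (nhds (∑' n, (t n : ℝ) * x ^ n)) := by
    intro x hsum
    have := (Filter.tendsto_add_atTop_iff_nat 1).2 hsum.hasSum.tendsto_sum_nat
    refine this.congr fun N => ?_
    rw [Finset.range_eq_Ico, Finset.sum_eq_sum_Ico_succ_bot (by omega), t0]
    simp
    rfl
  have hsub : ∀ x y : ℝ, 0 ≤ x → x < y → y < 1 → Summable (fun n => (t n : ℝ) * y ^ n) →
      ∀ N, EN t N x ≤ 2 := by
    intro x y h0 hxy hy1 hsy N
    have hx1 := hxy.trans hy1
    have hsx : Summable (fun n => (t n : ℝ) * x ^ n) := by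
      refine Summable.of_nonneg_of_le (fun n => by positivity) (fun n => ?_) hsy
      gcongr
    have key : (1 + 2 * ∑' n, (t n : ℝ) * x ^ n - x) *
        (1 + (∑' n, (t n : ℝ) * y ^ n - ∑' n, (t n : ℝ) * x ^ n)) ≤
        (1 + 2 * ∑' n, (t n : ℝ) * y ^ n - y) := by
      refine le_of_tendsto_of_tendsto' ((hElim x h0 hx1 hsx).mul
        (((hTlim y hsy).sub (hTlim x hsx)).const_add 1)) (hElim y (h0.trans hxy.le) hy1 hsy) ?_
      intro N
      have := EN_step_down t N h0 hxy.le hy1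
      simpa only [mul_sub, Finset.sum_sub_distrib] using this
    refine (hEC N x h0 hx1 hsx).trans ?_
    set Tx := ∑' n, (t n : ℝ) * x ^ n
    set Ty := ∑' n, (t n : ℝ) * y ^ n
    have hT : Tx ≤ Ty := hsx.tsum_le_tsum (fun n => by gcongr) hsy
    by_contra hcon
    push Not at hcon
    nlinarith
  set R : Set ℝ := {x | 0 ≤ x ∧ x < 1 ∧ Summable (fun n => (t n : ℝ) * x ^ n)} with hR
  have hRb : BddAbove R := ⟨1, fun x hx => hx.2.1.le⟩
  have hsum_of_lt : ∀ x y : ℝ, 0 ≤ x → x < y → y ∈ R → x ∈ R := by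
    intro x y h0 hxy hy
    refine ⟨h0, hxy.trans hy.2.1, Summable.of_nonneg_of_le (fun n => by positivity) (fun n => ?_) hy.2.2⟩
    gcongr
  obtain ⟨x₀, hx₀, hx₀1, hx₀s⟩ := extend_summable t mt Ht t1.le
    (fun N hN => by rw [mteq N 1 hN, C1, t1]) (fun N n hn hnN => by rw [mteq N n hnN, C2 n hn])
    ht3 le_rfl one_pos one_pos (r := 0) (κ := 1) (fun N => by rw [EN_zero]; norm_num)
  have hx₀R : x₀ ∈ R := ⟨hx₀.le, hx₀1, hx₀s⟩
  set ρ := sSup R with hρ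
  have hρ0 : 0 < ρ := hx₀.trans_le (le_csSup hRb hx₀R)
  have hlt : ∀ x, 0 ≤ x → x < ρ → ∀ N, EN t N x ≤ 2 := by
    intro x h0 hx N
    obtain ⟨y, hy, hxy⟩ := exists_lt_of_lt_csSup ⟨x₀, hx₀R⟩ hx
    exact hsub x y h0 hxy hy.2.1 hy.2.2 N
  have hρ1 : ρ < 1 := by
    by_contra hcon
    push Not at hcon
    have h := hlt (1/2 + 1/4) (by norm_num) (by linarith) 2
    have h2 := EN_ge_sum t 2 (x := 1/2+1/4) (by norm_num) (by norm_num)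
    rw [Finset.sum_Icc_succ_top (by omega)] at h2
    simp only [Finset.Icc_self, Finset.sum_singleton, t1] at h2
    have : (1 : ℝ) ≤ t 2 := by exact_mod_cast tpos 2 (by omega)
    norm_num at h2
    nlinarith
  have hEρ : ∀ N, EN t N ρ ≤ 2 := by
    intro N
    have hc := (EN_continuousAt t N hρ0.le hρ1).tendsto.mono_left
      (nhdsWithin_le_nhds (s := Set.Iio ρ))
    refine le_of_tendsto hc ?_
    filter_upwards [Ioo_mem_nhdsLT hρ0] with x hx
    exact hlt x hx.1.le hx.2 N
  have hρk : 0 < ρ ^ k := by positivity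
  have hρkp := EN_factor hρ0.le hρ1 hk
  obtain ⟨x₁, hx₁, hx₁1, hx₁s⟩ := extend_summable s ms Hs ((hst 1).trans t1.le) hs1 hs2 hs3
    hρ0.le hρ1 (κ := 2 * ρ ^ k) (by positivity) (fun N => by
      refine (EN_mono_N s (le_max_left N k) hρ0.le hρ1).trans ?_
      refine (EN_strict s t hst hk hsk (le_max_right N k) hρ0.le hρ1).trans ?_
      nlinarith [hEρ (max N k)])
  obtain ⟨z, hz1, hz2⟩ := exists_between hx₁
  obtain ⟨y, hy1, hy2⟩ := exists_between hz1
  have hy0 : 0 < y := hρ0.trans hy1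
  have hz0 : 0 < z := hy0.trans hy2
  have hyR : y ∉ R := fun h => absurd (le_csSup hRb h) (not_le.2 hy1)
  have hunb : ∃ m, 1 ≤ m ∧ 2 ≤ (t m : ℝ) * z ^ m := by
    by_contra hcon
    push Not at hcon
    apply hyR
    refine ⟨hy0.le, by linarith, ?_⟩
    have hq : y / z < 1 := (div_lt_one hz0).2 hy2
    have hg := (summable_geometric_of_lt_one (by positivity) hq).mul_left 2
    refine Summable.of_nonneg_of_le (fun n => by positivity) (fun n => ?_) hg
    rcases Nat.eq_zero_or_pos n with rfl | hn
    · simp [t0]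
    · rw [div_pow, mul_div_assoc', le_div_iff₀ (by positivity)]
      have := hcon n hn
      have h4 : 0 < y ^ n := by positivity
      nlinarith
  obtain ⟨m, hm, hm2⟩ := hunb
  have hlow : ∃ c : ℝ, 0 < c ∧ ∀ n, 1 ≤ n → c ≤ (t n : ℝ) * z ^ n := by
    have hne : (Finset.Icc 1 m).Nonempty := ⟨1, by simp [hm]⟩
    obtain ⟨i₀, hi₀, hmin⟩ := Finset.exists_min_image (Finset.Icc 1 m)
      (fun n => (t n : ℝ) * z ^ n) hne
    refine ⟨(t i₀ : ℝ) * z ^ i₀, ?_, ?_⟩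
    · have : (1 : ℝ) ≤ t i₀ := by exact_mod_cast tpos i₀ (Finset.mem_Icc.1 hi₀).1
      positivity
    · intro n
      induction n using Nat.strong_induction_on with
      | _ n ih =>
        intro hn
        rcases le_or_gt n m with h | h
        · exact hmin n (Finset.mem_Icc.2 ⟨hn, h⟩)
        · refine (ih (n - m) (by omega) (by omega)).trans ?_
          have h5 := hsup (n - m) m (by omega) hm
          rw [show n - m + m = n by omega] at h5
          have h6 : (t (n-m) : ℝ) * t m ≤ 2 * t n := by exact_mod_cast h5
          have h7 : z ^ n = z ^ (n-m) * z ^ m := by rw [← pow_add]; congr 1; omega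
          have h8 : 0 ≤ (t (n-m) : ℝ) * z ^ (n-m) := by positivity
          have h9 : 0 < z ^ n := by positivity
          nlinarith [mul_le_mul_of_nonneg_left hm2 h8, mul_le_mul_of_nonneg_right h6 h9.le]
  obtain ⟨c, hc0, hc⟩ := hlow
  have hx₁0 : 0 < x₁ := hρ0.trans hx₁
  set S := ∑' n, (s n : ℝ) * x₁ ^ n
  have hS : ∀ n, (s n : ℝ) * x₁ ^ n ≤ S := fun n => hx₁s.le_tsum n (fun j _ => by positivity)
  have hq : z / x₁ < 1 := (div_lt_one hx₁0).2 hz2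
  have hlim : Filter.Tendsto (fun n : ℕ => S / c * (z / x₁) ^ n) Filter.atTop (nhds 0) := by
    simpa using (tendsto_pow_atTop_nhds_zero_of_lt_one (by positivity) hq).const_mul (S / c)
  refine squeeze_zero' (Filter.Eventually.of_forall fun n => by positivity) ?_ hlim
  filter_upwards [Filter.eventually_ge_atTop 1] with n hn
  have ht : (1 : ℝ) ≤ t n := by exact_mod_cast tpos n hn
  rw [div_le_iff₀ (by linarith), div_pow]
  have hzn : 0 < z ^ n := by positivity
  have hxn : 0 < x₁ ^ n := by positivity
  have e : S / c * (z ^ n / x₁ ^ n) * t n = (S * (t n * z ^ n)) / (c * x₁ ^ n) := by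
    field_simp
  rw [e, le_div_iff₀ (by positivity)]
  have hS0 : 0 ≤ S := le_trans (by positivity) (hS n)
  nlinarith [mul_le_mul_of_nonneg_left (hc n hn) hS0, mul_le_mul_of_nonneg_right (hS n) hc0.le]

end AnalyticPart

section MultisetPart

lemma hasSum_multiset {Γ : Type} (w : Γ → ℕ) (F : Finset Γ) (hw : ∀ γ ∈ F, 1 ≤ w γ) {x : ℝ}
    (h0 : 0 ≤ x) (h1 : x < 1) :
    HasSum (fun m : {m : Multiset Γ // ∀ γ ∈ m, γ ∈ F} => x ^ ((m.1.map w).sum))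
      (∏ γ ∈ F, (1 - x ^ w γ)⁻¹) := by
  classical
  induction F using Finset.induction_on with
  | empty =>
    have : Unique {m : Multiset Γ // ∀ γ ∈ m, γ ∈ (∅ : Finset Γ)} :=
      ⟨⟨⟨0, by simp⟩⟩, fun m => Subtype.ext (Multiset.eq_zero_of_forall_notMem fun a ha => by
        simpa using m.2 a ha)⟩
    have h := hasSum_unique (fun m : {m : Multiset Γ // ∀ γ ∈ m, γ ∈ (∅ : Finset Γ)} =>
      x ^ ((m.1.map w).sum))
    have hd : (default : {m : Multiset Γ // ∀ γ ∈ m, γ ∈ (∅ : Finset Γ)}).1 = 0 :=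
      Multiset.eq_zero_of_forall_notMem fun a ha => by
        simpa using (default : {m : Multiset Γ // ∀ γ ∈ m, γ ∈ (∅ : Finset Γ)}).2 a ha
    simpa [hd] using h
  | insert a F ha ih =>
    have ih' := ih (fun γ hγ => hw γ (Finset.mem_insert_of_mem hγ))
    have hwa := hw a (Finset.mem_insert_self _ _)
    have hxa : x ^ w a < 1 := pow_lt_one₀ h0 h1 (by omega)
    have hgeo := hasSum_geometric_of_lt_one (by positivity : 0 ≤ x ^ w a) hxa
    let g : {m : Multiset Γ // ∀ γ ∈ m, γ ∈ F} → ℝ := fun m => x ^ ((m.1.map w).sum)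
    let f : ℕ → ℝ := fun n => (x ^ w a) ^ n
    have hf0 : 0 ≤ f := fun n => pow_nonneg (pow_nonneg h0 _) _
    have hg0 : 0 ≤ g := fun n => pow_nonneg h0 _
    have hsum : Summable fun p : ℕ × {m : Multiset Γ // ∀ γ ∈ m, γ ∈ F} => f p.1 * g p.2 :=
      Summable.mul_of_nonneg (f := f) (g := g) hgeo.summable ih'.summable hf0 hg0
    have hprod := HasSum.mul (f := f) (g := g) hgeo ih' hsum
    rw [Finset.prod_insert ha]
    let e : ℕ × {m : Multiset Γ // ∀ γ ∈ m, γ ∈ F} ≃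
        {m : Multiset Γ // ∀ γ ∈ m, γ ∈ insert a F} :=
      { toFun := fun p => ⟨Multiset.replicate p.1 a + p.2.1, by
          intro γ hγ
          rcases Multiset.mem_add.1 hγ with h | h
          · rw [Multiset.eq_of_mem_replicate h]; exact Finset.mem_insert_self _ _
          · exact Finset.mem_insert_of_mem (p.2.2 γ h)⟩
        invFun := fun m => (m.1.count a, ⟨m.1.filter (· ≠ a), by
          intro γ hγ
          have := Multiset.mem_filter.1 hγ
          exact Finset.mem_of_mem_insert_of_ne (m.2 γ this.1) this.2⟩)
        left_inv := by
          rintro ⟨n, m, hm⟩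
          have ham : a ∉ m := fun h => ha (hm a h)
          ext
          · simp [Multiset.count_eq_zero_of_notMem ham]
          · simp only [Multiset.filter_add]
            rw [Multiset.filter_eq_nil.2 (fun b hb => by simp [Multiset.eq_of_mem_replicate hb]),
              Multiset.filter_eq_self.2 (fun b hb => by rintro rfl; exact ham hb), zero_add]
        right_inv := by
          rintro ⟨m, hm⟩
          ext1
          simp only
          rw [← Multiset.filter_eq', Multiset.filter_add_not] }
    rw [← e.hasSum_iff]
    have hfun : ((fun m : {m : Multiset Γ // ∀ γ ∈ m, γ ∈ insert a F} =>
        x ^ ((m.1.map w).sum)) ∘ e) = fun p => f p.1 * g p.2 := by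
      funext p
      simp only [Function.comp, e, f, g, Equiv.coe_fn_mk, Multiset.map_add, Multiset.sum_add,
        Multiset.map_replicate, Multiset.sum_replicate, pow_add, smul_eq_mul]
      rw [← pow_mul, mul_comm p.1]
    rw [hfun]
    exact hprod

lemma hasSum_card {Γ : Type} (w : Γ → ℕ) (F : Finset Γ) (hw : ∀ γ ∈ F, 1 ≤ w γ) {x : ℝ}
    (h0 : 0 ≤ x) (h1 : x < 1) :
    HasSum (fun n => (Nat.card {m : Multiset Γ // (∀ γ ∈ m, γ ∈ F) ∧ (m.map w).sum = n} : ℝ) * x ^ n)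
      (∏ γ ∈ F, (1 - x ^ w γ)⁻¹) := by
  have h := (hasSum_multiset w F hw h0 h1).tsum_fiberwise (fun m => (m.1.map w).sum)
  have hfun : (fun n => (Nat.card {m : Multiset Γ // (∀ γ ∈ m, γ ∈ F) ∧ (m.map w).sum = n} : ℝ)
      * x ^ n) = fun c => ∑' (b : ↑((fun m : {m : Multiset Γ // ∀ γ ∈ m, γ ∈ F} =>
        (m.1.map w).sum) ⁻¹' {c})), x ^ ((b.1.1.map w).sum) := by
    funext n
    have h2 : ∀ b : ↑((fun m : {m : Multiset Γ // ∀ γ ∈ m, γ ∈ F} =>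
        (m.1.map w).sum) ⁻¹' {n}), x ^ ((b.1.1.map w).sum) = x ^ n := by
      rintro ⟨b, hb⟩
      have : (b.1.map w).sum = n := hb
      simp only [this]
    rw [tsum_congr h2, tsum_const, nsmul_eq_mul]
    congr 2
    exact Nat.card_congr
      { toFun := fun m => ⟨⟨m.1, m.2.1⟩, m.2.2⟩
        invFun := fun m => ⟨m.1.1, m.1.2, m.2⟩
        left_inv := fun _ => rfl
        right_inv := fun _ => rfl }
  rw [hfun]
  exact h

end MultisetPart

/-! ### Isomorphism classes of finite graphs -/

/-- Finite graphs on initial segments. -/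
abbrev FG := Σ n : ℕ, SimpleGraph (Fin n)

/-- Isomorphism as a setoid. -/
def fgSetoid : Setoid FG where
  r a b := Nonempty (a.2 ≃g b.2)
  iseqv := ⟨fun _ => ⟨Iso.refl⟩, fun ⟨e⟩ => ⟨e.symm⟩, fun ⟨e⟩ ⟨f⟩ => ⟨e.trans f⟩⟩

/-- Isomorphism classes of finite graphs. -/
def GC := Quotient fgSetoid

/-- The size of (the chosen representative of) a class. -/
noncomputable def sz (γ : GC) : ℕ := (Quotient.out γ).1

/-- The chosen representative. -/
noncomputable def rep (γ : GC) : SimpleGraph (Fin (sz γ)) := (Quotient.out γ).2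

/-- The class of a finite graph. -/
noncomputable def cls {V : Type} [Finite V] (G : SimpleGraph V) : GC :=
  Quotient.mk fgSetoid ⟨Nat.card V, G.comap (Finite.equivFin V).symm⟩

lemma cls_eq_iff {V W : Type} [Finite V] [Finite W] {G : SimpleGraph V} {H : SimpleGraph W} :
    cls G = cls H ↔ Nonempty (G ≃g H) := by
  have eG : G.comap (Finite.equivFin V).symm ≃g G := Iso.comap (Finite.equivFin V).symm G
  have eH : H.comap (Finite.equivFin W).symm ≃g H := Iso.comap (Finite.equivFin W).symm H
  constructor
  · intro h
    obtain ⟨e⟩ : Nonempty (G.comap (Finite.equivFin V).symm ≃g H.comap (Finite.equivFin W).symm) :=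
      Quotient.exact h
    exact ⟨(eG.symm.trans e).trans eH⟩
  · rintro ⟨e⟩
    exact Quotient.sound (s := fgSetoid) ⟨(eG.trans e).trans eH.symm⟩

lemma cls_rep (γ : GC) : cls (rep γ) = γ := by
  conv_rhs => rw [← Quotient.out_eq γ]
  exact Quotient.sound (s := fgSetoid) ⟨Iso.comap (Finite.equivFin _).symm _⟩

lemma rep_cls {V : Type} [Finite V] (G : SimpleGraph V) : Nonempty (rep (cls G) ≃g G) :=
  cls_eq_iff.1 (cls_rep _)

lemma sz_cls {V : Type} [Finite V] (G : SimpleGraph V) : sz (cls G) = Nat.card V := by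
  obtain ⟨e⟩ := rep_cls G
  have := Nat.card_congr e.toEquiv
  simpa using this

/-- Connected classes. -/
def Conn (γ : GC) : Prop := (rep γ).Connected

lemma conn_cls {V : Type} [Finite V] (G : SimpleGraph V) : Conn (cls G) ↔ G.Connected := by
  obtain ⟨e⟩ := rep_cls G
  exact e.connected_iff

/-- The multiset of component classes. -/
noncomputable def comps {V : Type} [Finite V] (G : SimpleGraph V) : Multiset GC :=
  letI := Fintype.ofFinite G.ConnectedComponent
  (Finset.univ : Finset G.ConnectedComponent).val.map (fun c => cls (G.induce c.supp))

/-- Restriction of an isomorphism to corresponding vertex sets. -/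
def isoInduce {V W : Type} {G : SimpleGraph V} {H : SimpleGraph W} (e : G ≃g H) (s : Set V)
    (t : Set W) (h : ∀ v, v ∈ s ↔ e v ∈ t) : G.induce s ≃g H.induce t where
  toEquiv := e.toEquiv.subtypeEquiv h
  map_rel_iff' := by
    intro a b
    exact e.map_rel_iff

lemma comps_eq {V : Type} [Finite V] (G : SimpleGraph V) {ι : Type} [Fintype ι] (π : V → ι)
    (hadj : ∀ u v, G.Adj u v → π u = π v)
    (hconn : ∀ i, (G.induce {v | π v = i}).Connected) :
    comps G = (Finset.univ : Finset ι).val.map (fun i => cls (G.induce {v | π v = i})) := by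
  classical
  let _ := Fintype.ofFinite G.ConnectedComponent
  have hreach : ∀ u v, G.Reachable u v → π u = π v := by
    rintro u v ⟨p⟩
    induction p with
    | nil => rfl
    | cons h _ ih => exact (hadj _ _ h).trans ih
  have hreach' : ∀ u v, π u = π v → G.Reachable u v := by
    intro u v h
    have := (hconn (π v)).preconnected ⟨u, h⟩ ⟨v, rfl⟩
    exact this.map (Embedding.induce _).toHom
  let f : G.ConnectedComponent → ι := Quot.lift π hreach
  have hf : Function.Bijective f := by
    constructor
    · intro a b
      induction a using ConnectedComponent.ind
      induction b using ConnectedComponent.ind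
      intro h
      exact ConnectedComponent.sound (hreach' _ _ h)
    · intro i
      obtain ⟨⟨v, hv⟩⟩ := (hconn i).nonempty
      exact ⟨G.connectedComponentMk v, hv⟩
  have hsupp : ∀ c : G.ConnectedComponent, c.supp = {v | π v = f c} := by
    intro c
    induction c using ConnectedComponent.ind with | _ w =>
    ext v
    simp only [ConnectedComponent.mem_supp_iff, Set.mem_ofPred_eq, ConnectedComponent.eq]
    exact ⟨hreach _ _, hreach' _ _⟩
  unfold comps
  have h1 : (Finset.univ : Finset ι).val =
      (Finset.univ : Finset G.ConnectedComponent).val.map f := by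
    have := Finset.map_univ_equiv (Equiv.ofBijective f hf)
    rw [← this]
    rfl
  rw [h1, Multiset.map_map]
  apply Multiset.map_congr
  · congr!
  · intro c _
    simp only [Function.comp]
    refine cls_eq_iff.2 ⟨isoInduce Iso.refl _ _ (fun v => ?_)⟩
    rw [hsupp c]
    exact Iff.rfl

lemma comps_iso {V W : Type} [Finite V] [Finite W] {G : SimpleGraph V} {H : SimpleGraph W}
    (e : G ≃g H) : comps G = comps H := by
  let _ := Fintype.ofFinite H.ConnectedComponent
  have ei : ∀ c : H.ConnectedComponent,
      G.induce {v | H.connectedComponentMk (e v) = c} ≃g H.induce c.supp := fun c =>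
    isoInduce e _ _ (fun v => Iff.rfl)
  rw [comps_eq G (fun v => H.connectedComponentMk (e v))]
  · unfold comps
    apply Multiset.map_congr rfl
    intro c _
    exact cls_eq_iff.2 ⟨ei c⟩
  · intro u v h
    exact ConnectedComponent.sound (e.map_adj_iff.2 h).reachable
  · intro c
    exact (ei c).connected_iff.2 c.connected_toSimpleGraph

lemma comps_sum {V W : Type} [Finite V] [Finite W] (G : SimpleGraph V) (H : SimpleGraph W) :
    comps (G ⊕g H) = comps G + comps H := by
  let _ := Fintype.ofFinite H.ConnectedComponent
  let _ := Fintype.ofFinite G.ConnectedComponent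
  let π : V ⊕ W → G.ConnectedComponent ⊕ H.ConnectedComponent :=
    Sum.map G.connectedComponentMk H.connectedComponentMk
  have el : ∀ c : G.ConnectedComponent,
      Nonempty (G.induce c.supp ≃g (G ⊕g H).induce {v | π v = Sum.inl c}) := by
    intro c
    refine ⟨⟨Equiv.ofBijective (fun v => ⟨Sum.inl v.1, congrArg Sum.inl v.2⟩) ⟨?_, ?_⟩, ?_⟩⟩
    · intro a b h
      simpa [Subtype.ext_iff] using h
    · rintro ⟨v | v, hv⟩
      · exact ⟨⟨v, Sum.inl_injective hv⟩, rfl⟩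
      · simp [π] at hv
    · intro a b
      exact @sum_adj_inl V W G H a.1 b.1
  have er : ∀ c : H.ConnectedComponent,
      Nonempty (H.induce c.supp ≃g (G ⊕g H).induce {v | π v = Sum.inr c}) := by
    intro c
    refine ⟨⟨Equiv.ofBijective (fun v => ⟨Sum.inr v.1, congrArg Sum.inr v.2⟩) ⟨?_, ?_⟩, ?_⟩⟩
    · intro a b h
      simpa [Subtype.ext_iff] using h
    · rintro ⟨v | v, hv⟩
      · simp [π] at hv
      · exact ⟨⟨v, Sum.inr_injective hv⟩, rfl⟩
    · intro a b
      exact @sum_adj_inr V W G H a.1 b.1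
  rw [comps_eq (G ⊕g H) π]
  · have huniv : (Finset.univ : Finset (G.ConnectedComponent ⊕ H.ConnectedComponent)).val =
        (Finset.univ : Finset G.ConnectedComponent).val.map Sum.inl +
        (Finset.univ : Finset H.ConnectedComponent).val.map Sum.inr := rfl
    rw [huniv, Multiset.map_add, Multiset.map_map, Multiset.map_map]
    unfold comps
    congr 1
    · apply Multiset.map_congr rfl
      intro c _
      exact (cls_eq_iff.2 (el c)).symm
    · apply Multiset.map_congr rfl
      intro c _
      exact (cls_eq_iff.2 (er c)).symm
  · rintro (u | u) (v | v) h
    · exact congrArg Sum.inl (ConnectedComponent.sound (sum_adj_inl.1 h).reachable)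
    · simp at h
    · simp at h
    · exact congrArg Sum.inr (ConnectedComponent.sound (sum_adj_inr.1 h).reachable)
  · rintro (c | c)
    · exact (el c).some.connected_iff.1 c.connected_toSimpleGraph
    · exact (er c).some.connected_iff.1 c.connected_toSimpleGraph

lemma comps_connected {V : Type} [Finite V] (G : SimpleGraph V) (h : G.Connected) :
    comps G = {cls G} := by
  have e : G ≃g G.induce {v | (fun _ => () : V → Unit) v = ()} :=
    { toFun := fun v => ⟨v, rfl⟩
      invFun := fun v => v.1
      left_inv := fun _ => rfl
      right_inv := fun _ => rfl
      map_rel_iff' := by intro a b; rfl }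
  rw [comps_eq G (fun _ => ())]
  · simp only [Finset.univ_unique, Finset.singleton_val, Multiset.map_singleton,
      Multiset.singleton_inj]
    exact (cls_eq_iff.2 ⟨e⟩).symm
  · intros; rfl
  · intro i
    exact e.connected_iff.1 h

lemma exists_equiv_of_map_univ {ι κ α : Type} [Fintype ι] [Fintype κ] (f : ι → α) (g : κ → α)
    (h : (Finset.univ : Finset ι).val.map f = (Finset.univ : Finset κ).val.map g) :
    ∃ e : ι ≃ κ, ∀ i, g (e i) = f i := by
  classical
  have hc : ∀ a, Fintype.card {i // f i = a} = Fintype.card {k // g k = a} := by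
    intro a
    have := congrArg (Multiset.count a) h
    rw [Multiset.count_map, Multiset.count_map] at this
    rw [Fintype.card_subtype, Fintype.card_subtype]
    simp only [eq_comm (a := a)] at this
    exact this
  let e : ι ≃ κ := ((Equiv.sigmaFiberEquiv f).symm.trans
    (Equiv.sigmaCongrRight (fun a => Fintype.equivOfCardEq (hc a)))).trans (Equiv.sigmaFiberEquiv g)
  refine ⟨e, fun i => ?_⟩
  exact ((Fintype.equivOfCardEq (hc (f i))) ⟨i, rfl⟩).2

lemma iso_of_comps_eq {V W : Type} [Finite V] [Finite W] {G : SimpleGraph V} {H : SimpleGraph W}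
    (h : comps G = comps H) : Nonempty (G ≃g H) := by
  let _ := Fintype.ofFinite H.ConnectedComponent
  let _ := Fintype.ofFinite G.ConnectedComponent
  obtain ⟨e, he⟩ := exists_equiv_of_map_univ _ _ h
  have hi : ∀ c, Nonempty (G.induce c.supp ≃g H.induce (e c).supp) := fun c =>
    cls_eq_iff.1 (he c).symm
  let φ := fun c => (hi c).some
  let f : V → W := fun v => (φ (G.connectedComponentMk v) ⟨v, rfl⟩).1
  have hf : ∀ (c) (v) (hv : v ∈ c.supp), f v = (φ c ⟨v, hv⟩).1 := by
    rintro c v hv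
    have hv' : G.connectedComponentMk v = c := hv
    subst hv'
    rfl
  have hfc : ∀ v, H.connectedComponentMk (f v) = e (G.connectedComponentMk v) := fun v =>
    (φ (G.connectedComponentMk v) ⟨v, rfl⟩).2
  have hinj : Function.Injective f := by
    intro u v huv
    have h1 : G.connectedComponentMk u = G.connectedComponentMk v := by
      apply e.injective
      rw [← hfc, ← hfc, huv]
    rw [hf (G.connectedComponentMk v) u h1, hf (G.connectedComponentMk v) v rfl] at huv
    have := (φ (G.connectedComponentMk v)).injective (Subtype.ext huv)
    exact congrArg Subtype.val this
  have hsurj : Function.Surjective f := by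
    intro w
    obtain ⟨c, hc⟩ := e.surjective (H.connectedComponentMk w)
    obtain ⟨⟨v, hv⟩, hvw⟩ := (φ c).surjective ⟨w, hc.symm⟩
    refine ⟨v, ?_⟩
    rw [hf c v hv, hvw]
  refine ⟨⟨Equiv.ofBijective f ⟨hinj, hsurj⟩, ?_⟩⟩
  intro u v
  change H.Adj (f u) (f v) ↔ G.Adj u v
  by_cases huv : G.connectedComponentMk u = G.connectedComponentMk v
  · rw [hf (G.connectedComponentMk v) u huv, hf (G.connectedComponentMk v) v rfl]
    exact (φ (G.connectedComponentMk v)).map_rel_iff (a := ⟨u, huv⟩) (b := ⟨v, rfl⟩)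
  · constructor
    · intro hadj
      exfalso
      apply huv
      apply e.injective
      rw [← hfc, ← hfc]
      exact ConnectedComponent.sound hadj.reachable
    · intro hadj
      exact absurd (ConnectedComponent.sound hadj.reachable) huv

lemma sz_comps {V : Type} [Finite V] (G : SimpleGraph V) :
    ((comps G).map sz).sum = Nat.card V := by
  let _ := Fintype.ofFinite G.ConnectedComponent
  have : Nat.card V = ∑ c : G.ConnectedComponent, Nat.card c.supp := by
    rw [← Nat.card_sigma]
    exact Nat.card_congr (Equiv.sigmaFiberEquiv G.connectedComponentMk).symm
  rw [this]
  unfold comps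
  rw [Multiset.map_map]
  simp only [Function.comp, sz_cls]
  rfl

lemma conn_of_mem_comps {V : Type} [Finite V] (G : SimpleGraph V) {γ : GC} (h : γ ∈ comps G) :
    Conn γ := by
  unfold comps at h
  obtain ⟨c, _, rfl⟩ := Multiset.mem_map.1 h
  rw [conn_cls]
  exact c.connected_toSimpleGraph

lemma exists_comps (m : Multiset GC) (hm : ∀ γ ∈ m, Conn γ) : ∃ γ : GC, comps (rep γ) = m := by
  induction m using Multiset.induction_on with
  | empty =>
    refine ⟨cls (⊥ : SimpleGraph (Fin 0)), ?_⟩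
    rw [comps_iso (rep_cls _).some]
    apply Multiset.eq_zero_of_forall_notMem
    intro γ hγ
    unfold comps at hγ
    obtain ⟨c, _, _⟩ := Multiset.mem_map.1 hγ
    induction c using ConnectedComponent.ind with | _ v => exact v.elim0
  | cons a m ih =>
    obtain ⟨γ, hγ⟩ := ih (fun δ hδ => hm δ (Multiset.mem_cons_of_mem hδ))
    refine ⟨cls (rep a ⊕g rep γ), ?_⟩
    rw [comps_iso (rep_cls _).some, comps_sum, hγ,
      comps_connected _ (hm a (Multiset.mem_cons_self _ _)), cls_rep, Multiset.singleton_add]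

/-! ### Cographs -/

lemma isCograph_iff {V : Type} {G : SimpleGraph V} : IsCograph G ↔
    ∀ a b c d, G.Adj a b → G.Adj b c → G.Adj c d → G.Adj a c ∨ G.Adj b d ∨ G.Adj a d := by
  constructor
  · intro h a b c d hab hbc hcd
    by_contra hcon
    push Not at hcon
    obtain ⟨hac, hbd, had⟩ := hcon
    apply h
    have nac : a ≠ c := by rintro rfl; exact had hcd
    have nad : a ≠ d := by rintro rfl; exact hac hcd.symm
    have nbd : b ≠ d := by rintro rfl; exact had hab
    have nab := hab.ne
    have nbc := hbc.ne
    have ncd := hcd.ne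
    refine ⟨⟨![a, b, c, d], ?_⟩, ?_⟩
    · intro i j
      fin_cases i <;> fin_cases j <;> simp [nab, nbc, ncd, nac, nad, nbd, nab.symm, nbc.symm,
        ncd.symm, nac.symm, nad.symm, nbd.symm]
    · intro i j
      change G.Adj (![a, b, c, d] i) (![a, b, c, d] j) ↔ _
      fin_cases i <;> fin_cases j <;>
        simp [pathGraph_adj, hab, hbc, hcd, hac, hbd, had, G.adj_comm b a, G.adj_comm c b,
          G.adj_comm d c, G.adj_comm c a, G.adj_comm d b, G.adj_comm d a]
  · rintro h ⟨f, hf⟩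
    have := h (f 0) (f 1) (f 2) (f 3) ((hf _ _).2 (by simp [pathGraph_adj]))
      ((hf _ _).2 (by simp [pathGraph_adj])) ((hf _ _).2 (by simp [pathGraph_adj]))
    rw [hf, hf, hf] at this
    simp [pathGraph_adj] at this

lemma IsCograph.comap {V W : Type} {G : SimpleGraph V} {H : SimpleGraph W} (h : IsCograph H)
    (f : V → W) (hf : ∀ a b, H.Adj (f a) (f b) ↔ G.Adj a b) : IsCograph G := by
  rw [isCograph_iff] at h ⊢
  intro a b c d
  have := h (f a) (f b) (f c) (f d)
  simpa only [hf] using this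

lemma isCograph_iso {V W : Type} {G : SimpleGraph V} {H : SimpleGraph W} (e : G ≃g H) :
    IsCograph G ↔ IsCograph H :=
  ⟨fun h => h.comap e.symm (fun _ _ => e.symm.map_rel_iff),
    fun h => h.comap e (fun _ _ => e.map_rel_iff)⟩

lemma IsCograph.compl {V : Type} {G : SimpleGraph V} (h : IsCograph G) : IsCograph Gᶜ := by
  rw [isCograph_iff] at h ⊢
  intro a b c d hab hbc hcd
  by_contra hcon
  push Not at hcon
  obtain ⟨hac, hbd, had⟩ := hcon
  have key : ∀ x y, x ≠ y → ¬ Gᶜ.Adj x y → G.Adj x y := by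
    intro x y hxy h1
    by_contra h2
    exact h1 ((compl_adj _ _ _).2 ⟨hxy, h2⟩)
  have nac : a ≠ c := by rintro rfl; exact had hcd
  have nad : a ≠ d := by rintro rfl; exact hac hcd.symm
  have nbd : b ≠ d := by rintro rfl; exact had hab
  have := h b d a c (key _ _ nbd hbd) (key _ _ nad had).symm (key _ _ nac hac)
  simp only [compl_adj] at hab hbc hcd
  rw [G.adj_comm b a, G.adj_comm d c] at this
  tauto

lemma isCograph_compl_iff {V : Type} {G : SimpleGraph V} : IsCograph Gᶜ ↔ IsCograph G :=
  ⟨fun h => by simpa using h.compl, fun h => h.compl⟩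

lemma seinsche_aux {V : Type} [Finite V] {G : SimpleGraph V} (h : IsCograph G)
    (hG : G.Connected) (hG' : Gᶜ.Connected) (v : V) (hv : Nontrivial V)
    (hS : ¬ (G.induce {x | x ≠ v}).Connected) : False := by
  rw [isCograph_iff] at h
  obtain ⟨v', hv'⟩ := exists_ne v
  have c1 : ∀ x (hx : x ≠ v), ∃ w : {x | x ≠ v},
      (G.induce {x | x ≠ v}).Reachable ⟨x, hx⟩ w ∧ G.Adj w v := by
    have aux : ∀ x z, G.Walk x z → z = v → ∀ hx : x ≠ v, ∃ w : {x | x ≠ v},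
        (G.induce {x | x ≠ v}).Reachable ⟨x, hx⟩ w ∧ G.Adj w v := by
      intro x z p
      induction p with
      | nil => intro h1 h2; exact absurd h1 h2
      | @cons x y z hxy p ih =>
        intro h1 hx
        by_cases hy : y = v
        · subst hy
          exact ⟨⟨x, hx⟩, Reachable.refl _, hxy⟩
        · obtain ⟨w, hw, hwv⟩ := ih h1 hy
          refine ⟨w, Reachable.trans (Adj.reachable ?_) hw, hwv⟩
          exact hxy
    intro x hx
    obtain ⟨p⟩ := hG.preconnected x v
    exact aux x v p rfl hx
  obtain ⟨u, hu⟩ : ∃ u, Gᶜ.Adj u v := by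
    obtain ⟨p⟩ := hG'.preconnected v v'
    cases p with
    | nil => exact absurd rfl hv'
    | cons h _ => exact ⟨_, h.symm⟩
  have c2 : ∀ x y : {x | x ≠ v}, (G.induce {x | x ≠ v}).Walk x y → ¬ G.Adj x v → G.Adj y v →
      ∃ a b : {x | x ≠ v}, G.Adj a b ∧ G.Adj a v ∧ ¬ G.Adj b v ∧
        (G.induce {x | x ≠ v}).Reachable x b ∧ (G.induce {x | x ≠ v}).Reachable x a := by
    intro x y p
    induction p with
    | nil => intro h1 h2; exact absurd h2 h1
    | @cons x y z hxy p ih =>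
      intro h1 h2
      by_cases hy : G.Adj y v
      · exact ⟨y, x, G.adj_symm hxy, hy, h1, Reachable.refl _, hxy.reachable⟩
      · obtain ⟨a, b, h3, h4, h5, h6, h7⟩ := ih hy h2
        exact ⟨a, b, h3, h4, h5, hxy.reachable.trans h6, hxy.reachable.trans h7⟩
  obtain ⟨w, ⟨p⟩, hwv⟩ := c1 u hu.ne
  obtain ⟨a, b, hab, hav, hbv, hub, hua⟩ := c2 _ _ p ((compl_adj _ _ _).1 hu).2 hwv
  have hne : Nonempty {x | x ≠ v} := ⟨⟨v', hv'⟩⟩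
  have hpre : ¬ (G.induce {x | x ≠ v}).Preconnected := fun hp => hS ⟨hp⟩
  obtain ⟨z, hz⟩ : ∃ z : {x | x ≠ v}, ¬ (G.induce {x | x ≠ v}).Reachable ⟨u, hu.ne⟩ z := by
    by_contra hcon
    push Not at hcon
    exact hpre fun x y => (hcon x).symm.trans (hcon y)
  obtain ⟨d, hzd, hdv⟩ := c1 z.1 z.2
  have hd : ∀ x : {x | x ≠ v}, (G.induce {x | x ≠ v}).Reachable ⟨u, hu.ne⟩ x →
      ¬ G.Adj d x := by
    intro x hx hdx
    have : (G.induce {x | x ≠ v}).Adj d x := hdx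
    exact hz (hx.trans (this.reachable.symm.trans hzd.symm))
  rcases h d v a b hdv hav.symm hab with h1 | h1 | h1
  · exact hd a hua h1
  · exact hbv h1.symm
  · exact hd b hub h1

lemma seinsche_card (n : ℕ) : ∀ {V : Type} [Finite V] (G : SimpleGraph V), Nat.card V = n →
    Nontrivial V → IsCograph G → G.Connected → Gᶜ.Connected → False := by
  induction n using Nat.strong_induction_on with | _ n ih =>
  intro V _ G hn hV hG h1 h2
  obtain ⟨v⟩ := h1.nonempty
  have hcard : Nat.card {x | x ≠ v} < n := by
    rw [← hn]
    exact Finite.card_subtype_lt (p := fun x => x ≠ v) (x := v) (by simp)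
  have hi : (G.induce {x | x ≠ v})ᶜ = Gᶜ.induce {x | x ≠ v} := by
    ext a b
    simp [Subtype.ext_iff]
  by_cases hS : Nontrivial {x | x ≠ v}
  · by_cases c1 : (G.induce {x | x ≠ v}).Connected
    · by_cases c2 : (Gᶜ.induce {x | x ≠ v}).Connected
      · exact ih _ hcard (G.induce {x | x ≠ v}) rfl hS
          (hG.comap Subtype.val (fun _ _ => Iff.rfl)) c1 (by rwa [hi])
      · exact seinsche_aux hG.compl h2 (by simpa using h1) v hV c2
    · exact seinsche_aux hG h1 h2 v hV c1
  · rw [not_nontrivial_iff_subsingleton] at hS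
    obtain ⟨v', hv'⟩ := exists_ne v
    have key : ∀ K : SimpleGraph V, K.Connected → K.Adj v v' := by
      intro K hK
      obtain ⟨p⟩ := hK.preconnected v v'
      cases p with
      | nil => exact absurd rfl hv'
      | @cons _ y _ h _ =>
        have : (⟨y, h.ne'⟩ : {x | x ≠ v}) = ⟨v', hv'⟩ := Subsingleton.elim _ _
        rw [Subtype.mk.injEq] at this
        exact this ▸ h
    exact ((compl_adj _ _ _).1 (key _ h2)).2 (key _ h1)

lemma conn_compl_iff {V : Type} [Finite V] {G : SimpleGraph V} (hV : 2 ≤ Nat.card V)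
    (h : IsCograph G) : Gᶜ.Connected ↔ ¬ G.Connected := by
  have hn : Nontrivial V := by
    rw [← Finite.one_lt_card_iff_nontrivial]
    exact hV
  constructor
  · intro h1 h2
    exact seinsche_card _ G rfl hn h h2 h1
  · intro h1
    exact (connected_or_connected_compl G).resolve_left h1

/-- Cograph classes. -/
def Co (γ : GC) : Prop := IsCograph (rep γ)

lemma co_cls {V : Type} [Finite V] (G : SimpleGraph V) : Co (cls G) ↔ IsCograph G :=
  isCograph_iso (rep_cls G).some

lemma co_comps {V : Type} [Finite V] (G : SimpleGraph V) :
    IsCograph G ↔ ∀ γ ∈ comps G, Co γ := by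
  constructor
  · intro h γ hγ
    unfold comps at hγ
    obtain ⟨c, _, rfl⟩ := Multiset.mem_map.1 hγ
    rw [co_cls]
    exact h.comap Subtype.val (fun _ _ => Iff.rfl)
  · intro h
    rw [isCograph_iff]
    intro a b c d hab hbc hcd
    have h1 : IsCograph (G.induce (G.connectedComponentMk a).supp) := by
      rw [← co_cls]
      apply h
      unfold comps
      let _ := Fintype.ofFinite G.ConnectedComponent
      exact Multiset.mem_map.2 ⟨_, Finset.mem_univ _, rfl⟩
    have hb : G.connectedComponentMk b = G.connectedComponentMk a :=
      ConnectedComponent.sound hab.symm.reachable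
    have hc : G.connectedComponentMk c = G.connectedComponentMk a :=
      (ConnectedComponent.sound hbc.symm.reachable).trans hb
    have hd : G.connectedComponentMk d = G.connectedComponentMk a :=
      (ConnectedComponent.sound hcd.symm.reachable).trans hc
    exact isCograph_iff.1 h1 ⟨a, rfl⟩ ⟨b, hb⟩ ⟨c, hc⟩ ⟨d, hd⟩ hab hbc hcd

/-! ### Graphs with a generalized cospectral mate -/

/-- Real adjacency matrix. -/
noncomputable def adjM {V : Type} (G : SimpleGraph V) : Matrix V V ℝ :=
  open Classical in fun i j => if G.Adj i j then 1 else 0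

lemma adjM_congr {V W : Type} {G : SimpleGraph V} {H : SimpleGraph W} {i j : V} {k l : W}
    (h : G.Adj i j ↔ H.Adj k l) : adjM G i j = adjM H k l := by
  unfold adjM
  by_cases h1 : H.Adj k l
  · rw [if_pos h1, if_pos (h.2 h1)]
  · rw [if_neg h1, if_neg (fun h2 => h1 (h.1 h2))]

/-- `G` has a non-isomorphic mate, similar to it through a matrix with unit row and column sums. -/
def Good {V : Type} [Fintype V] [DecidableEq V] (G : SimpleGraph V) : Prop :=
  ∃ H : SimpleGraph V, ¬ Nonempty (G ≃g H) ∧ ∃ Q Q' : Matrix V V ℝ, Q * Q' = 1 ∧ Q' * Q = 1 ∧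
    Q * adjM G = adjM H * Q ∧ (∀ i, ∑ j, Q i j = 1) ∧ (∀ j, ∑ i, Q i j = 1)

lemma Good.iso {V W : Type} [Fintype V] [DecidableEq V] [Fintype W] [DecidableEq W]
    {G : SimpleGraph V} {G' : SimpleGraph W} (h : Good G) (e : G ≃g G') : Good G' := by
  obtain ⟨H, hH, Q, Q', h1, h2, h3, h4, h5⟩ := h
  have hA : adjM G' = (adjM G).submatrix e.symm e.symm := by
    ext i j
    simp only [adjM, Matrix.submatrix_apply]
    rw [← e.symm.map_adj_iff]
  refine ⟨H.comap e.symm, ?_, Q.submatrix e.symm e.symm, Q'.submatrix e.symm e.symm,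
    ?_, ?_, ?_, ?_, ?_⟩
  · rintro ⟨f⟩
    exact hH ⟨(e.trans f).trans (Iso.comap e.symm.toEquiv H)⟩
  · have := Matrix.submatrix_mul_equiv Q Q' e.symm e.symm.toEquiv e.symm
    exact this.trans (by rw [h1]; exact Matrix.submatrix_one_equiv e.symm.toEquiv)
  · have := Matrix.submatrix_mul_equiv Q' Q e.symm e.symm.toEquiv e.symm
    exact this.trans (by rw [h2]; exact Matrix.submatrix_one_equiv e.symm.toEquiv)
  · have hB : adjM (H.comap e.symm) = (adjM H).submatrix e.symm e.symm := by
      ext i j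
      exact adjM_congr Iff.rfl
    rw [hA, hB]
    have t1 := Matrix.submatrix_mul_equiv Q (adjM G) e.symm e.symm.toEquiv e.symm
    have t2 := Matrix.submatrix_mul_equiv (adjM H) Q e.symm e.symm.toEquiv e.symm
    exact t1.trans (by rw [h3]; exact t2.symm)
  · intro i
    rw [← h4 (e.symm i)]
    exact Equiv.sum_comp e.symm.toEquiv (fun j => Q (e.symm i) j)
  · intro i
    rw [← h5 (e.symm i)]
    exact Equiv.sum_comp e.symm.toEquiv (fun j => Q j (e.symm i))

lemma adjM_compl {V : Type} [DecidableEq V] (G : SimpleGraph V) :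
    adjM Gᶜ = Matrix.of (fun _ _ => 1) - 1 - adjM G := by
  ext i j
  simp only [adjM, compl_adj, Matrix.sub_apply, Matrix.of_apply, Matrix.one_apply]
  by_cases h : i = j
  · subst h; simp
  · by_cases h2 : G.Adj i j <;> simp [h, h2]

/-- Complementation of an isomorphism. -/
def isoCompl {V W : Type} {G : SimpleGraph V} {H : SimpleGraph W} (e : G ≃g H) : Gᶜ ≃g Hᶜ where
  toEquiv := e.toEquiv
  map_rel_iff' := by
    intro a b
    have h1 : H.Adj (e.toEquiv a) (e.toEquiv b) ↔ G.Adj a b := e.map_rel_iff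
    rw [compl_adj, compl_adj, h1, e.toEquiv.injective.ne_iff]

lemma iso_compl_iff {V W : Type} {G : SimpleGraph V} {H : SimpleGraph W} :
    Nonempty (Gᶜ ≃g Hᶜ) ↔ Nonempty (G ≃g H) := by
  constructor
  · rintro ⟨e⟩
    have := isoCompl e
    rw [compl_compl, compl_compl] at this
    exact ⟨this⟩
  · rintro ⟨e⟩
    exact ⟨isoCompl e⟩

lemma Good.compl {V : Type} [Fintype V] [DecidableEq V] {G : SimpleGraph V} (h : Good G) :
    Good Gᶜ := by
  obtain ⟨H, hH, Q, Q', h1, h2, h3, h4, h5⟩ := h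
  refine ⟨Hᶜ, fun h => hH (iso_compl_iff.1 h), Q, Q', h1, h2, ?_, h4, h5⟩
  rw [adjM_compl, adjM_compl, mul_sub, mul_sub, sub_mul, sub_mul, h3, mul_one, one_mul]
  congr 2
  ext i j
  simp [Matrix.mul_apply, h4, h5]

lemma good_compl_iff {V : Type} [Fintype V] [DecidableEq V] {G : SimpleGraph V} :
    Good Gᶜ ↔ Good G :=
  ⟨fun h => by simpa using h.compl, fun h => h.compl⟩

lemma adjM_sum {V W : Type} (G : SimpleGraph V) (H : SimpleGraph W) :
    adjM (G ⊕g H) = Matrix.fromBlocks (adjM G) 0 0 (adjM H) := by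
  ext (i | i) (j | j)
  · exact adjM_congr sum_adj_inl
  · simp [adjM]
  · simp [adjM]
  · exact adjM_congr sum_adj_inr

lemma Good.sum {V W : Type} [Fintype V] [DecidableEq V] [Fintype W] [DecidableEq W]
    {G : SimpleGraph V} (h : Good G) (R : SimpleGraph W) : Good (G ⊕g R) := by
  obtain ⟨H, hH, Q, Q', h1, h2, h3, h4, h5⟩ := h
  refine ⟨H ⊕g R, ?_, Matrix.fromBlocks Q 0 0 1, Matrix.fromBlocks Q' 0 0 1, ?_, ?_, ?_, ?_, ?_⟩
  · rintro ⟨e⟩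
    have := comps_iso e
    rw [comps_sum, comps_sum] at this
    exact hH (iso_of_comps_eq (add_right_cancel this))
  · simp [Matrix.fromBlocks_multiply, h1]
  · simp [Matrix.fromBlocks_multiply, h2]
  · simp [adjM_sum, Matrix.fromBlocks_multiply, h3]
  · rintro (i | i)
    · simp [Fintype.sum_sum_type, h4]
    · simp [Fintype.sum_sum_type, Matrix.one_apply]
  · rintro (i | i)
    · simp [Fintype.sum_sum_type, h5]
    · simp [Fintype.sum_sum_type, Matrix.one_apply]

lemma Good.mate {V : Type} [Fintype V] [DecidableEq V] {G : SimpleGraph V} (h : Good G) :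
    ∃ H : SimpleGraph V, Cospectral G H ∧ ¬ Nonempty (G ≃g H) := by
  obtain ⟨H, hH, Q, Q', h1, h2, h3, -, -⟩ := h
  refine ⟨H, ?_, hH⟩
  have ha : ∀ K : SimpleGraph V, adjCharPoly K = (adjM K).charpoly := by
    intro K
    unfold adjCharPoly
    congr 1
  unfold Cospectral
  rw [ha, ha]
  have := Matrix.charpoly_units_conj ⟨Q, Q', h1, h2⟩ (adjM G)
  rw [← this]
  congr 1
  change Q * adjM G * Q⁻¹ = adjM H
  rw [Matrix.inv_eq_right_inv h1, h3, mul_assoc, h1, mul_one]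

/-- Classes which are not `Good`. -/
def Bad (γ : GC) : Prop := ¬ Good (rep γ)

lemma bad_cls {V : Type} [Fintype V] [DecidableEq V] (G : SimpleGraph V) :
    Bad (cls G) ↔ ¬ Good G := by
  obtain ⟨e⟩ := rep_cls G
  exact not_congr ⟨fun h => h.iso e, fun h => h.iso e.symm⟩

lemma bad_of_mem_comps {V : Type} [Fintype V] [DecidableEq V] (G : SimpleGraph V) (hG : ¬ Good G)
    {γ : GC} (h : γ ∈ comps G) : Bad γ := by
  intro hγ
  apply hG
  obtain ⟨m, hm⟩ := Multiset.exists_cons_of_mem h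
  obtain ⟨δ, hδ⟩ := exists_comps m (fun x hx => conn_of_mem_comps G
    (by rw [hm]; exact Multiset.mem_cons_of_mem hx))
  have h1 : comps (rep γ ⊕g rep δ) = comps G := by
    rw [comps_sum, hδ, hm, comps_connected _ (conn_of_mem_comps G h), cls_rep,
      Multiset.singleton_add]
  obtain ⟨e⟩ := iso_of_comps_eq h1
  exact (hγ.sum (rep δ)).iso e

/-! ### The base pair on 25 vertices -/

/-- Common part: four triangles and three 4-cycles. -/
def bD (i j : ℕ) : Bool :=
  (Nat.blt i 12 && Nat.blt j 12 && Nat.beq (i / 3) (j / 3) && !Nat.beq i j) ||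
  (Nat.ble 12 i && Nat.blt i 24 && Nat.ble 12 j && Nat.blt j 24 && Nat.beq (i / 4) (j / 4) &&
    !Nat.beq (i % 2) (j % 2))

/-- First graph: the vertex 24 is joined to the triangles. -/
def bG (i j : ℕ) : Bool :=
  bD i j || (Nat.beq i 24 && Nat.blt j 12) || (Nat.beq j 24 && Nat.blt i 12)

/-- Second graph: the vertex 24 is joined to the 4-cycles. -/
def bH (i j : ℕ) : Bool :=
  bD i j || (Nat.beq i 24 && Nat.ble 12 j && Nat.blt j 24) ||
    (Nat.beq j 24 && Nat.ble 12 i && Nat.blt i 24)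

lemma bG_sym : ∀ i j : Fin 25, bG i j = bG j i := by decide +kernel
lemma bH_sym : ∀ i j : Fin 25, bH i j = bH j i := by decide +kernel
lemma bG_irr : ∀ i : Fin 25, bG i i = false := by decide +kernel
lemma bH_irr : ∀ i : Fin 25, bH i i = false := by decide +kernel

/-- First graph of the base pair. -/
def baseG : SimpleGraph (Fin 25) where
  Adj i j := bG i j = true
  symm := ⟨fun i j h => by rw [bG_sym]; exact h⟩
  loopless := ⟨fun i h => by rw [bG_irr] at h; exact absurd h (by decide)⟩

/-- Second graph of the base pair. -/
def baseH : SimpleGraph (Fin 25) where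
  Adj i j := bH i j = true
  symm := ⟨fun i j h => by rw [bH_sym]; exact h⟩
  loopless := ⟨fun i h => by rw [bH_irr] at h; exact absurd h (by decide)⟩

lemma baseG_cograph : IsCograph baseG := by
  rw [isCograph_iff]
  have : ∀ a b : Fin 25, bG a b = true → ∀ c : Fin 25, bG b c = true → ∀ d : Fin 25,
      bG c d = true → (bG a c || bG b d || bG a d) = true := by decide +kernel
  intro a b c d hab hbc hcd
  have := this a b hab c hbc d hcd
  rw [Bool.or_eq_true, Bool.or_eq_true] at this
  exact or_assoc.1 this

lemma baseH_no_clique : ∀ a b : Fin 25, bH a b = true → ∀ c : Fin 25, bH a c = true →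
    bH b c = true → ∀ d : Fin 25, (bH a d && bH b d && bH c d) = false := by decide +kernel

lemma base_not_iso : ¬ Nonempty (baseG ≃g baseH) := by
  rintro ⟨e⟩
  have h : ∀ a b : Fin 25, bG a b = true → bH (e a) (e b) = true := fun a b hab =>
    e.map_adj_iff.2 hab
  have := baseH_no_clique (e 24) (e 0) (h _ _ (by decide)) (e 1) (h _ _ (by decide))
    (h _ _ (by decide)) (e 2)
  rw [h 24 2 (by decide), h 0 2 (by decide), h 1 2 (by decide)] at this
  exact absurd this (by decide)

/-- Twelve times the similarity matrix. -/
def bQ (i j : ℕ) : ℤ :=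
  (if Nat.blt i 24 && Nat.blt j 24 then 1 else 0) + (if Nat.beq i j then (-12) else 0) +
    (if Nat.beq i 24 && Nat.beq j 24 then 24 else 0)

/-- Integer indicator. -/
def bI (b : Bool) : ℤ := if b then 1 else 0

lemma bQ_row : ∀ i : Fin 25, ∑ j : Fin 25, bQ i j = 12 := by decide +kernel
lemma bQ_col : ∀ j : Fin 25, ∑ i : Fin 25, bQ i j = 12 := by decide +kernel
lemma bQ_sq : ∀ i j : Fin 25, ∑ k : Fin 25, bQ i k * bQ k j = if i = j then 144 else 0 := by
  decide +kernel
lemma bQ_inter : ∀ i j : Fin 25, ∑ k : Fin 25, bQ i k * bI (bG k j) =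
    ∑ k : Fin 25, bI (bH i k) * bQ k j := by
  decide +kernel

lemma base_good : Good baseG := by
  have hQ : ∀ i j : Fin 25, ∑ k : Fin 25, ((bQ i k : ℝ) / 12) * ((bQ k j : ℝ) / 12) =
      (1 : Matrix (Fin 25) (Fin 25) ℝ) i j := by
    intro i j
    have h1 : ∑ k : Fin 25, (bQ i k : ℝ) * (bQ k j : ℝ) = if i = j then 144 else 0 := by
      exact_mod_cast bQ_sq i j
    have h2 : ∀ k : Fin 25, ((bQ i k : ℝ) / 12) * ((bQ k j : ℝ) / 12) =
        ((bQ i k : ℝ) * (bQ k j : ℝ)) / 144 := fun k => by ring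
    simp only [h2]
    rw [← Finset.sum_div, h1, Matrix.one_apply]
    split_ifs <;> norm_num
  have hQ' : (Matrix.of fun i j : Fin 25 => (bQ i j : ℝ) / 12) *
      (Matrix.of fun i j : Fin 25 => (bQ i j : ℝ) / 12) = 1 := by
    ext i j
    rw [Matrix.mul_apply]
    exact hQ i j
  have hI : ∀ (K : SimpleGraph (Fin 25)) (b : Bool) (i j : Fin 25), (K.Adj i j ↔ b = true) →
      adjM K i j = (bI b : ℝ) := by
    intro K b i j h
    unfold adjM bI
    by_cases hb : b = true
    · rw [if_pos (h.2 hb), if_pos hb]; simp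
    · rw [if_neg (fun h' => hb (h.1 h')), if_neg hb]; simp
  refine ⟨baseH, base_not_iso, Matrix.of fun i j : Fin 25 => (bQ i j : ℝ) / 12,
    Matrix.of fun i j : Fin 25 => (bQ i j : ℝ) / 12, hQ', hQ', ?_, ?_, ?_⟩
  · ext i j
    rw [Matrix.mul_apply, Matrix.mul_apply]
    have h1 : ∀ k, adjM baseG k j = (bI (bG k j) : ℝ) := fun k => hI _ _ _ _ Iff.rfl
    have h2 : ∀ k, adjM baseH i k = (bI (bH i k) : ℝ) := fun k => hI _ _ _ _ Iff.rfl
    have h3 : ∑ k : Fin 25, (bQ i k : ℝ) * (bI (bG k j) : ℝ) =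
        ∑ k : Fin 25, (bI (bH i k) : ℝ) * (bQ k j : ℝ) := by
      exact_mod_cast bQ_inter i j
    simp only [h1, h2, Matrix.of_apply, div_mul_eq_mul_div, mul_div_assoc']
    rw [← Finset.sum_div, ← Finset.sum_div, h3]
  · intro i
    have h1 : ∑ j : Fin 25, (bQ i j : ℝ) = 12 := by exact_mod_cast bQ_row i
    simp only [Matrix.of_apply]
    rw [← Finset.sum_div, h1]; norm_num
  · intro i
    have h1 : ∑ j : Fin 25, (bQ j i : ℝ) = 12 := by exact_mod_cast bQ_col i
    simp only [Matrix.of_apply]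
    rw [← Finset.sum_div, h1]; norm_num

lemma baseG_not_connected : ¬ baseG.Connected := by
  intro h
  have key : ∀ i j : Fin 25, bG i j = true →
      (Nat.blt i 12 || Nat.beq i 24) = (Nat.blt j 12 || Nat.beq j 24) := by decide +kernel
  obtain ⟨p⟩ := h.preconnected 0 12
  have : ∀ i j : Fin 25, baseG.Walk i j →
      (Nat.blt i 12 || Nat.beq i 24) = (Nat.blt j 12 || Nat.beq j 24) := by
    intro i j p
    induction p with
    | nil => rfl
    | cons h _ ih => exact (key _ _ h).trans ih
  exact absurd (this _ _ p) (by decide)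

/-- There is a connected good cograph class on 25 vertices. -/
lemma exists_good : ∃ γ : GC, sz γ = 25 ∧ Conn γ ∧ Co γ ∧ ¬ Bad γ := by
  refine ⟨cls baseGᶜ, ?_, ?_, ?_, ?_⟩
  · rw [sz_cls]; simp
  · rw [conn_cls, conn_compl_iff (by simp) baseG_cograph]
    exact baseG_not_connected
  · rw [co_cls]; exact baseG_cograph.compl
  · rw [bad_cls]; exact not_not.2 base_good.compl

/-! ### Counting -/

/-- Complement of a class. -/
noncomputable def cc (γ : GC) : GC := cls (rep γ)ᶜ

lemma cc_cls {V : Type} [Finite V] (G : SimpleGraph V) : cc (cls G) = cls Gᶜ :=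
  cls_eq_iff.2 (iso_compl_iff.2 (rep_cls G))

lemma cc_cc (γ : GC) : cc (cc γ) = γ := by
  unfold cc
  have := cc_cls (rep γ)ᶜ
  rw [compl_compl, cls_rep] at this
  exact this

lemma sz_cc (γ : GC) : sz (cc γ) = sz γ := by
  unfold cc
  rw [sz_cls]; simp

lemma co_cc {γ : GC} (h : Co γ) : Co (cc γ) := by
  unfold cc
  rw [co_cls]
  exact IsCograph.compl h

lemma bad_cc {γ : GC} (h : Bad γ) : Bad (cc γ) := by
  unfold cc
  rw [bad_cls, good_compl_iff]
  exact h

lemma conn_cc {γ : GC} (h : Co γ) (h2 : 2 ≤ sz γ) : Conn (cc γ) ↔ ¬ Conn γ := by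
  unfold cc
  rw [conn_cls, conn_compl_iff (by simpa using h2) h]
  rfl

lemma gc_ext {γ δ : GC} (h : comps (rep γ) = comps (rep δ)) : γ = δ := by
  have := cls_eq_iff.2 (iso_of_comps_eq h)
  rwa [cls_rep, cls_rep] at this

lemma sz_sum (γ : GC) : ((comps (rep γ)).map sz).sum = sz γ := by
  rw [sz_comps]; simp

lemma one_le_sz {γ : GC} (h : Conn γ) : 1 ≤ sz γ := by
  obtain ⟨v⟩ := h.nonempty
  have := v.2
  omega

lemma sz_le_of_mem {γ δ : GC} (h : δ ∈ comps (rep γ)) : sz δ ≤ sz γ := by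
  rw [← sz_sum γ]
  exact Multiset.le_sum_of_mem (Multiset.mem_map_of_mem sz h)

lemma comps_conn {γ : GC} (h : Conn γ) : comps (rep γ) = {γ} := by
  rw [comps_connected _ h, cls_rep]

lemma sz_lt_of_mem {γ δ : GC} (hγ : ¬ Conn γ) (h : δ ∈ comps (rep γ)) : sz δ < sz γ := by
  have hδ := conn_of_mem_comps _ h
  obtain ⟨m, hm⟩ := Multiset.exists_cons_of_mem h
  have h1 := sz_sum γ
  rw [hm, Multiset.map_cons, Multiset.sum_cons] at h1
  by_contra hcon
  have h2 : (m.map sz).sum = 0 := by omega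
  have h3 : m = 0 := by
    apply Multiset.eq_zero_of_forall_notMem
    intro ε hε
    have h4 : Conn ε := conn_of_mem_comps (rep γ) (by rw [hm]; exact Multiset.mem_cons_of_mem hε)
    have h5 := one_le_sz h4
    have h6 : sz ε ≤ (m.map sz).sum := Multiset.le_sum_of_mem (Multiset.mem_map_of_mem sz hε)
    omega
  rw [h3] at hm
  apply hγ
  have : γ = δ := gc_ext (by rw [hm, comps_conn hδ]; rfl)
  rwa [this]

lemma finite_sz (n : ℕ) : {γ : GC | sz γ = n}.Finite := by
  apply (Set.finite_range (fun G : SimpleGraph (Fin n) => cls G)).subset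
  rintro γ rfl
  exact ⟨rep γ, cls_rep γ⟩

lemma finite_sz_le (n : ℕ) : {γ : GC | sz γ ≤ n}.Finite := by
  have : {γ : GC | sz γ ≤ n} = ⋃ i ∈ Finset.range (n + 1), {γ : GC | sz γ = i} := by
    ext γ
    simp
  rw [this]
  exact Set.Finite.biUnion (Finset.finite_toSet _) (fun i _ => finite_sz i)

/-- All classes of size `n` with property `A`. -/
def US (A : GC → Prop) (n : ℕ) : Set GC := {γ | sz γ = n ∧ A γ}

/-- All connected classes of size `n` with property `A`. -/
def TS (A : GC → Prop) (n : ℕ) : Set GC := {γ | sz γ = n ∧ A γ ∧ Conn γ}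

lemma US_fin (A : GC → Prop) (n : ℕ) : (US A n).Finite := (finite_sz n).subset fun _ h => h.1
lemma TS_fin (A : GC → Prop) (n : ℕ) : (TS A n).Finite := (finite_sz n).subset fun _ h => h.1

/-- Connected classes of size at most `N` with property `A`. -/
noncomputable def FS (A : GC → Prop) (N : ℕ) : Finset GC :=
  ((finite_sz_le N).subset (t := {γ | sz γ ≤ N ∧ A γ ∧ Conn γ}) (fun _ h => h.1)).toFinset

lemma mem_FS {A : GC → Prop} {N : ℕ} {γ : GC} : γ ∈ FS A N ↔ sz γ ≤ N ∧ A γ ∧ Conn γ := by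
  simp [FS]

/-- Multisets of connected classes. -/
def MS (A : GC → Prop) (N n : ℕ) : Set (Multiset GC) :=
  {m | (∀ γ ∈ m, γ ∈ FS A N) ∧ (m.map sz).sum = n}

lemma MS_inj {A : GC → Prop} (hA : ∀ γ, A γ → Co γ) (N n : ℕ) :
    ∃ f : Multiset GC → GC, Set.InjOn f (MS A N n) ∧ Set.MapsTo f (MS A N n) (US Co n) := by
  classical
  have h : ∀ m : Multiset GC, ∃ γ : GC, (∀ δ ∈ m, Conn δ) → comps (rep γ) = m := by
    intro m
    by_cases hm : ∀ δ ∈ m, Conn δ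
    · obtain ⟨γ, hγ⟩ := exists_comps m hm
      exact ⟨γ, fun _ => hγ⟩
    · exact ⟨cls (⊥ : SimpleGraph (Fin 0)), fun h => absurd h hm⟩
  choose f hf using h
  have hc : ∀ m ∈ MS A N n, comps (rep (f m)) = m := fun m hm =>
    hf m fun δ hδ => (mem_FS.1 (hm.1 δ hδ)).2.2
  refine ⟨f, ?_, ?_⟩
  · intro m hm m' hm' h
    rw [← hc m hm, ← hc m' hm', h]
  · intro m hm
    refine ⟨?_, ?_⟩
    · rw [← sz_sum, hc m hm, hm.2]
    · unfold Co
      rw [co_comps, hc m hm]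
      exact fun γ hγ => hA γ (mem_FS.1 (hm.1 γ hγ)).2.1

lemma MS_fin {A : GC → Prop} (hA : ∀ γ, A γ → Co γ) (N n : ℕ) : (MS A N n).Finite := by
  obtain ⟨f, h1, h2⟩ := MS_inj hA N n
  exact Set.Finite.of_finite_image ((US_fin Co n).subset h2.image_subset) h1

lemma MS_le (N n : ℕ) : (MS Co N n).ncard ≤ (US Co n).ncard := by
  obtain ⟨f, h1, h2⟩ := MS_inj (A := Co) (fun _ h => h) N n
  exact Set.ncard_le_ncard_of_injOn f h2 h1 (US_fin _ _)

lemma US_le_MS {A : GC → Prop} (hA : ∀ γ, A γ → Co γ)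
    (hAh : ∀ γ, A γ → ∀ δ ∈ comps (rep γ), A δ) {N n : ℕ} (h : n ≤ N) :
    (US A n).ncard ≤ (MS A N n).ncard := by
  refine Set.ncard_le_ncard_of_injOn (fun γ => comps (rep γ)) ?_ ?_ (MS_fin hA _ _)
  · rintro γ ⟨h1, h2⟩
    refine ⟨fun δ hδ => ?_, ?_⟩
    · exact mem_FS.2 ⟨(sz_le_of_mem hδ).trans (h1.trans_le h), hAh γ h2 δ hδ,
        conn_of_mem_comps _ hδ⟩
    · rw [← h1]; exact sz_sum γ
  · intro γ _ δ _ h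
    exact gc_ext h

lemma TS_le_US (A : GC → Prop) (n : ℕ) : (TS A n).ncard ≤ (US A n).ncard :=
  Set.ncard_le_ncard (fun _ h => ⟨h.1, h.2.1⟩) (US_fin _ _)

lemma TS_le_MS {A : GC → Prop} (hA : ∀ γ, A γ → Co γ) (hAc : ∀ γ, A γ → A (cc γ))
    (hAh : ∀ γ, A γ → ∀ δ ∈ comps (rep γ), A δ) {N : ℕ} (hN : 1 ≤ N) :
    (TS A (N + 1)).ncard ≤ (MS A N (N + 1)).ncard := by
  refine Set.ncard_le_ncard_of_injOn (fun γ => comps (rep (cc γ))) ?_ ?_ (MS_fin hA _ _)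
  · rintro γ ⟨h1, h2, h3⟩
    have h4 : ¬ Conn (cc γ) := by
      rw [conn_cc (hA γ h2) (by omega)]
      exact not_not.2 h3
    refine ⟨fun δ hδ => ?_, ?_⟩
    · have := sz_lt_of_mem h4 hδ
      rw [sz_cc, h1] at this
      exact mem_FS.2 ⟨by omega, hAh _ (hAc γ h2) δ hδ, conn_of_mem_comps _ hδ⟩
    · exact (sz_sum (cc γ)).trans ((sz_cc γ).trans h1)
  · intro γ _ δ _ h
    have := congrArg cc (gc_ext h)
    rwa [cc_cc, cc_cc] at this

lemma US_eq {A : GC → Prop} (hA : ∀ γ, A γ → Co γ) (hAc : ∀ γ, A γ → A (cc γ)) {n : ℕ}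
    (hn : 2 ≤ n) : (US A n).ncard = 2 * (TS A n).ncard := by
  have hinj : Function.Injective cc := fun a b h => by
    have := congrArg cc h
    rwa [cc_cc, cc_cc] at this
  have h1 : US A n = TS A n ∪ cc '' TS A n := by
    ext γ
    constructor
    · rintro ⟨h1, h2⟩
      by_cases h3 : Conn γ
      · exact Or.inl ⟨h1, h2, h3⟩
      · refine Or.inr ⟨cc γ, ⟨by rw [sz_cc, h1], hAc γ h2, ?_⟩, cc_cc γ⟩
        rw [conn_cc (hA γ h2) (by omega)]
        exact h3
    · rintro (h | ⟨δ, h, rfl⟩)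
      · exact ⟨h.1, h.2.1⟩
      · exact ⟨by rw [sz_cc, h.1], hAc _ h.2.1⟩
  have h2 : Disjoint (TS A n) (cc '' TS A n) := by
    rw [Set.disjoint_left]
    rintro _ h ⟨δ, h', rfl⟩
    refine (conn_cc (hA δ h'.2.1) ?_).1 h.2.2 h'.2.2
    rw [h'.1]; exact hn
  rw [h1, Set.ncard_union_eq h2 (TS_fin _ _) ((TS_fin _ _).image _),
    Set.ncard_image_of_injective _ hinj]
  ring

lemma hasSum_MS (A : GC → Prop) (N : ℕ) (x : ℝ) (h0 : 0 ≤ x) (h1 : x < 1) :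
    HasSum (fun n => ((MS A N n).ncard : ℝ) * x ^ n) (EN (fun n => (TS A n).ncard) N x) := by
  classical
  have h := hasSum_card sz (FS A N) (fun γ hγ => one_le_sz (mem_FS.1 hγ).2.2) h0 h1
  have e : ∏ γ ∈ FS A N, (1 - x ^ sz γ)⁻¹ = EN (fun n => (TS A n).ncard) N x := by
    unfold EN
    rw [← Finset.prod_fiberwise_of_maps_to (g := sz) (t := Finset.Icc 1 N)]
    · apply Finset.prod_congr rfl
      intro i hi
      have hc : (Finset.filter (fun γ => sz γ = i) (FS A N)).card = (TS A i).ncard := by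
        rw [← Set.ncard_coe_finset]
        congr 1
        ext γ
        simp only [Finset.coe_filter, mem_FS, TS, Set.mem_ofPred_eq]
        have := (Finset.mem_Icc.1 hi).2
        constructor
        · rintro ⟨⟨_, h2, h3⟩, h4⟩
          exact ⟨h4, h2, h3⟩
        · rintro ⟨h4, h2, h3⟩
          exact ⟨⟨by omega, h2, h3⟩, h4⟩
      change _ = ((1 - x ^ i)⁻¹) ^ (TS A i).ncard
      rw [← hc, ← Finset.prod_const]
      apply Finset.prod_congr rfl
      intro γ hγ
      rw [(Finset.mem_filter.1 hγ).2]
    · intro γ hγ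
      have := mem_FS.1 hγ
      exact Finset.mem_Icc.2 ⟨one_le_sz this.2.2, this.1⟩
  rw [← e]
  exact h

lemma co_small {γ : GC} (h : sz γ ≤ 1) : Co γ := by
  unfold Co
  rw [isCograph_iff]
  intro a b c d hab
  have h1 := a.2
  have h2 := b.2
  have : a ≠ b := hab.ne
  exact absurd (Fin.ext (by omega)) this

lemma sz_small_eq {γ δ : GC} (h : sz γ ≤ 1) (h' : sz δ = sz γ) : γ = δ := by
  rw [← cls_rep γ, ← cls_rep δ]
  apply cls_eq_iff.2
  refine ⟨⟨finCongr h'.symm, ?_⟩⟩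
  intro a b
  have h1 := a.2
  have h2 := b.2
  have hab : a = b := Fin.ext (by omega)
  subst hab
  simp

lemma US_small {n : ℕ} (h : n ≤ 1) : (US Co n).ncard = 1 := by
  rw [Set.ncard_eq_one]
  refine ⟨cls (⊥ : SimpleGraph (Fin n)), ?_⟩
  have hs : sz (cls (⊥ : SimpleGraph (Fin n))) = n := by rw [sz_cls]; simp
  ext γ
  constructor
  · rintro ⟨h1, h2⟩
    exact sz_small_eq (by omega) (by omega)
  · rintro rfl
    exact ⟨hs, co_small (by omega)⟩

lemma TS_zero : (TS Co 0).ncard = 0 := by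
  rw [Set.ncard_eq_zero (TS_fin _ _), Set.eq_empty_iff_forall_notMem]
  rintro γ ⟨h1, _, h3⟩
  have := one_le_sz h3
  omega

lemma TS_one : (TS Co 1).ncard = 1 := by
  have : TS Co 1 = US Co 1 := by
    ext γ
    constructor
    · exact fun h => ⟨h.1, h.2.1⟩
    · rintro ⟨h1, h2⟩
      refine ⟨h1, h2, ?_⟩
      have : Subsingleton (Fin (sz γ)) := by rw [h1]; infer_instance
      have : Nonempty (Fin (sz γ)) := by rw [h1]; infer_instance
      exact ⟨fun a b => by rw [Subsingleton.elim a b]⟩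
  rw [this, US_small le_rfl]

lemma TS_sup (n m : ℕ) (hn : 1 ≤ n) (hm : 1 ≤ m) :
    (TS Co n).ncard * (TS Co m).ncard ≤ 2 * (TS Co (n + m)).ncard := by
  classical
  have hN : (TS Co n).ncard = (TS_fin Co n).toFinset.card := Set.ncard_eq_toFinset_card _ _
  have hM : (TS Co m).ncard = (TS_fin Co m).toFinset.card := Set.ncard_eq_toFinset_card _ _
  have hNM : (TS Co (n + m)).ncard = (TS_fin Co (n + m)).toFinset.card :=
    Set.ncard_eq_toFinset_card _ _
  have hcomps : ∀ a b, Conn a → Conn b →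
      comps (rep (cls (rep a ⊕g rep b))) = {a, b} := by
    intro a b ha hb
    rw [comps_iso (rep_cls _).some, comps_sum, comps_conn ha, comps_conn hb]
    rfl
  rw [hN, hM, hNM, ← Finset.card_product]
  refine (Finset.card_le_mul_card_image (f := fun p : GC × GC => cc (cls (rep p.1 ⊕g rep p.2)))
    _ 2 ?_).trans (Nat.mul_le_mul_left 2 (Finset.card_le_card ?_))
  · intro y hy
    obtain ⟨⟨a, b⟩, hab, rfl⟩ := Finset.mem_image.1 hy
    refine (Finset.card_le_card (t := {(a, b), (b, a)}) ?_).trans Finset.card_le_two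
    rintro ⟨c, d⟩ hcd
    simp only [Finset.mem_filter, Finset.mem_product, Set.Finite.mem_toFinset] at hcd hab
    obtain ⟨⟨hc, hd⟩, he⟩ := hcd
    have he' := congrArg cc he
    rw [cc_cc, cc_cc] at he'
    have h1 := hcomps a b hab.1.2.2 hab.2.2.2
    have h2 := hcomps c d hc.2.2 hd.2.2
    rw [he', h1] at h2
    have h3 : (a = c ∧ b = d) ∨ (a = d ∧ b = c) := by
      have := Multiset.cons_eq_cons.1 h2
      rcases this with ⟨h3, h4⟩ | ⟨_, cs, h3, h4⟩
      · exact Or.inl ⟨h3, Multiset.singleton_inj.1 h4⟩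
      · right
        have h5 : cs = 0 := by
          have := congrArg Multiset.card h3
          simpa using this
        subst h5
        simp only [Multiset.cons_zero, Multiset.singleton_inj] at h3 h4
        exact ⟨h4.symm, h3⟩
    rcases h3 with ⟨rfl, rfl⟩ | ⟨rfl, rfl⟩ <;> simp
  · intro y hy
    obtain ⟨⟨a, b⟩, hab, rfl⟩ := Finset.mem_image.1 hy
    simp only [Finset.mem_product, Set.Finite.mem_toFinset] at hab ⊢
    obtain ⟨ha, hb⟩ := hab
    have h1 := hcomps a b ha.2.2 hb.2.2
    have hs : sz (cls (rep a ⊕g rep b)) = n + m := by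
      rw [← sz_sum, h1]
      simp [ha.1, hb.1]
    have hco : Co (cls (rep a ⊕g rep b)) := by
      unfold Co
      rw [co_comps, h1]
      intro γ hγ
      simp only [Multiset.insert_eq_cons, Multiset.mem_cons, Multiset.mem_singleton] at hγ
      rcases hγ with rfl | rfl
      · exact ha.2.1
      · exact hb.2.1
    refine ⟨by rw [sz_cc, hs], co_cc hco, ?_⟩
    rw [conn_cc hco (by omega)]
    intro hcon
    rw [comps_conn hcon] at h1
    have := congrArg Multiset.card h1
    simp at this

/-! ### Class counts -/

lemma classCount_rel {n : ℕ} {P : SimpleGraph (Fin n) → Prop}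
    {a b : {G : SimpleGraph (Fin n) // P G}}
    (h : Quot.mk (fun G H : {G : SimpleGraph (Fin n) // P G} => Nonempty (G.1 ≃g H.1)) a =
      Quot.mk _ b) : Nonempty (a.1 ≃g b.1) := by
  have e : Equivalence (fun G H : {G : SimpleGraph (Fin n) // P G} => Nonempty (G.1 ≃g H.1)) :=
    ⟨fun _ => ⟨Iso.refl⟩, fun ⟨e⟩ => ⟨e.symm⟩, fun ⟨e⟩ ⟨f⟩ => ⟨e.trans f⟩⟩
  exact (e.eqvGen_iff).1 (Quot.eqvGen_exact h)

lemma classCount_mono {n : ℕ} {P Q : SimpleGraph (Fin n) → Prop} (h : ∀ G, P G → Q G) :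
    classCount n P ≤ classCount n Q := by
  unfold classCount
  refine Nat.card_le_card_of_injective
    (Quot.lift (fun a => Quot.mk _ ⟨a.1, h _ a.2⟩) (fun a b hab => Quot.sound hab)) ?_
  intro a b
  induction a using Quot.ind with | _ a =>
  induction b using Quot.ind with | _ b =>
  intro hab
  have := classCount_rel (P := Q) (a := ⟨a.1, h _ a.2⟩) (b := ⟨b.1, h _ b.2⟩) hab
  exact Quot.sound this

lemma classCount_eq (n : ℕ) (A : GC → Prop) :
    classCount n (fun G => A (cls G)) = (US A n).ncard := by
  unfold classCount
  rw [← Nat.card_coe_set_eq]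
  refine Nat.card_congr (Equiv.ofBijective (Quot.lift
    (fun a => (⟨cls a.1, by rw [sz_cls]; simp, a.2⟩ : US A n)) ?_) ⟨?_, ?_⟩)
  · intro a b hab
    exact Subtype.ext (cls_eq_iff.2 hab)
  · intro a b
    induction a using Quot.ind with | _ a =>
    induction b using Quot.ind with | _ b =>
    intro hab
    exact Quot.sound (cls_eq_iff.1 (congrArg Subtype.val hab))
  · rintro ⟨γ, rfl, h⟩
    exact ⟨Quot.mk _ ⟨rep γ, by simpa only [cls_rep] using h⟩, Subtype.ext (cls_rep γ)⟩

/-- Cograph classes without a generalized mate. -/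
def CoBad (γ : GC) : Prop := Co γ ∧ Bad γ

lemma ratio_zero : Filter.Tendsto (fun n => ((TS CoBad n).ncard : ℝ) / (TS Co n).ncard)
    Filter.atTop (nhds 0) := by
  have hCh : ∀ γ, Co γ → ∀ δ ∈ comps (rep γ), Co δ := fun γ h => (co_comps _).1 h
  have hBc : ∀ γ, CoBad γ → CoBad (cc γ) := fun γ h => ⟨co_cc h.1, bad_cc h.2⟩
  have hBh : ∀ γ, CoBad γ → ∀ δ ∈ comps (rep γ), CoBad δ := fun γ h δ hδ =>
    ⟨hCh γ h.1 δ hδ, bad_of_mem_comps _ h.2 hδ⟩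
  have hB : ∀ γ, CoBad γ → Co γ := fun γ h => h.1
  refine analytic_main (fun n => (TS Co n).ncard) (fun n => (TS CoBad n).ncard)
    (fun n => (US Co n).ncard) (fun N n => (MS Co N n).ncard) (fun N n => (MS CoBad N n).ncard)
    (fun N x => hasSum_MS Co N x) (fun N x => hasSum_MS CoBad N x) MS_le
    (fun N n h => le_antisymm (MS_le N n) (US_le_MS (fun _ h => h) hCh h))
    (US_small (by norm_num)) (US_small le_rfl)
    (fun n hn => US_eq (fun _ h => h) (fun _ h => co_cc h) hn) TS_zero TS_one
    (fun N hN => TS_le_MS (fun _ h => h) (fun _ h => co_cc h) hCh hN)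
    (fun N hN => (TS_le_US _ _).trans (US_le_MS hB hBh hN))
    (fun N n h2 hN => ?_)
    (fun N hN => TS_le_MS hB hBc hBh hN)
    (fun n => Set.ncard_le_ncard (fun γ h => ⟨h.1, h.2.1.1, h.2.2⟩) (TS_fin _ _))
    (k := 25) (by norm_num) ?_ TS_sup
  · rw [← US_eq hB hBc h2]
    exact US_le_MS hB hBh hN
  · apply Set.ncard_lt_ncard _ (TS_fin _ _)
    rw [Set.ssubset_iff_exists]
    obtain ⟨γ, h1, h2, h3, h4⟩ := exists_good
    exact ⟨fun γ h => ⟨h.1, h.2.1.1, h.2.2⟩, γ, ⟨h1, h3, h2⟩, fun h => h4 h.2.1.2⟩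

lemma TS_pos (n : ℕ) : 1 ≤ (TS Co (n + 1)).ncard := by
  induction n with
  | zero => rw [TS_one]
  | succ n ih =>
    have := TS_sup (n + 1) 1 (by omega) le_rfl
    rw [TS_one] at this
    omega

/-- **Almost all cographs have a cospectral mate.** If `c n` is the number of isomorphism
classes of cographs on `n` vertices and `c* n` the number of isomorphism classes of cographs
on `n` vertices having a cospectral, non-isomorphic mate, then `c* n / c n → 1`. -/
theorem almost_all_cographs_have_cospectral_mate :
    Filter.Tendsto
      (fun n : ℕ =>
        (classCount n (fun G => IsCograph G ∧
            ∃ H : SimpleGraph (Fin n), Cospectral G H ∧ ¬ Nonempty (G ≃g H)) : ℝ) /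
        (classCount n (fun G => IsCograph G) : ℝ))
      Filter.atTop (nhds 1) := by
  have hc : ∀ n, classCount n (fun G => IsCograph G) = (US Co n).ncard := by
    intro n
    rw [← classCount_eq]
    congr 1
    funext G
    exact propext (co_cls G).symm
  have hbound : ∀ n, 2 ≤ n →
      1 - ((TS CoBad n).ncard : ℝ) / (TS Co n).ncard ≤
        (classCount n (fun G => IsCograph G ∧
            ∃ H : SimpleGraph (Fin n), Cospectral G H ∧ ¬ Nonempty (G ≃g H)) : ℝ) /
        (classCount n (fun G => IsCograph G) : ℝ) := by
    intro n hn
    have h1 : (US Co n).ncard ≤ classCount n (fun G => IsCograph G ∧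
        ∃ H : SimpleGraph (Fin n), Cospectral G H ∧ ¬ Nonempty (G ≃g H)) +
          (US CoBad n).ncard := by
      have h2 : classCount n (fun G => Co (cls G) ∧ ¬ Bad (cls G)) ≤
          classCount n (fun G => IsCograph G ∧
            ∃ H : SimpleGraph (Fin n), Cospectral G H ∧ ¬ Nonempty (G ≃g H)) := by
        apply classCount_mono
        rintro G ⟨h3, h4⟩
        rw [bad_cls, not_not] at h4
        exact ⟨(co_cls G).1 h3, h4.mate⟩
      have h3 := classCount_eq n (fun γ => Co γ ∧ ¬ Bad γ)
      rw [h3] at h2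
      refine le_trans ?_ (Nat.add_le_add_right h2 _)
      refine le_trans (Set.ncard_le_ncard ?_ ((US_fin _ _).union (US_fin _ _)))
        (Set.ncard_union_le _ _)
      rintro γ ⟨h5, h6⟩
      by_cases h7 : Bad γ
      · exact Or.inr ⟨h5, h6, h7⟩
      · exact Or.inl ⟨h5, h6, h7⟩
    rw [hc, US_eq (A := Co) (fun _ h => h) (fun _ h => co_cc h) hn] at *
    rw [US_eq (A := CoBad) (fun _ h => h.1) (fun _ h => ⟨co_cc h.1, bad_cc h.2⟩) hn] at h1
    have hp : 1 ≤ (TS Co n).ncard := by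
      obtain ⟨m, rfl⟩ : ∃ m, n = m + 1 := ⟨n - 1, by omega⟩
      exact TS_pos m
    have hp' : (0 : ℝ) < (TS Co n).ncard := by exact_mod_cast hp
    have h1' : (2 : ℝ) * (TS Co n).ncard ≤ (classCount n (fun G => IsCograph G ∧
        ∃ H : SimpleGraph (Fin n), Cospectral G H ∧ ¬ Nonempty (G ≃g H)) : ℝ) +
          2 * (TS CoBad n).ncard := by exact_mod_cast h1
    rw [le_div_iff₀ (by push_cast; positivity)]
    push_cast
    field_simp
    linarith
  have hle : ∀ n, (classCount n (fun G => IsCograph G ∧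
            ∃ H : SimpleGraph (Fin n), Cospectral G H ∧ ¬ Nonempty (G ≃g H)) : ℝ) /
        (classCount n (fun G => IsCograph G) : ℝ) ≤ 1 := by
    intro n
    apply div_le_one_of_le₀ _ (Nat.cast_nonneg _)
    have h1 : classCount n (fun G => IsCograph G ∧
        ∃ H : SimpleGraph (Fin n), Cospectral G H ∧ ¬ Nonempty (G ≃g H)) ≤
        classCount n (fun G => IsCograph G) := classCount_mono (fun G h => h.1)
    exact_mod_cast h1
  have hlim := ratio_zero.const_sub 1
  rw [sub_zero] at hlim
  refine tendsto_of_tendsto_of_tendsto_of_le_of_le' hlim tendsto_const_nhds ?_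
    (Filter.Eventually.of_forall hle)
  filter_upwards [Filter.eventually_ge_atTop 2] with n hn using hbound n hn
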